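/- arXiv:2007.00070 — 2 statements merged into one kernel-verified Lean document; each statement's English description precedes it below -/
import Mathlib

section
/- Fix integers d ≥ 2 and m ≥ 1. Suppose A ⊆ ℤ^m is d-sparse and stable in (ℤ^m,+). Then A belongs to the Boolean algebra of subsets of ℤ^m generated by the sets β + (C(a₁;δ₁) + ⋯ + C(a_k;δ_k)), where k ∈ ℕ, β, a₁, …, a_k ∈ ℤ^m, δ₁, …, δ_k are positive integers, + of sets denotes Minkowski sum, and the empty sum is {0}. -/
/-- A language is regular if it is recognized by a DFA with finitely many states. -/
def RegularLang {α : Type} (L : Set (List α)) : Prop :=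
  ∃ (Q : Type) (_ : Fintype Q) (M : DFA α Q), M.accepts = L

/-- A language is sparse if it is regular and the number of its words of length at most `k`
is bounded by `C·(k^p + 1)`. -/
def SparseLang {α : Type} (L : Set (List α)) : Prop :=
  RegularLang L ∧ ∃ C p : ℕ, ∀ k : ℕ,
    {σ ∈ L | σ.length ≤ k}.Finite ∧ {σ ∈ L | σ.length ≤ k}.ncard ≤ C * (k ^ p + 1)

/-- The canonical base-`d` representation of an integer (least significant digit first,
no trailing zeroes; digits of a negative integer are negated). -/
def canonRep (d : ℕ) (a : ℤ) : List ℤ :=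
  if 0 ≤ a then (Nat.digits d a.toNat).map fun k => (k : ℤ)
  else (Nat.digits d (-a).toNat).map fun k => -(k : ℤ)

/-- The canonical base-`d` representation of a tuple in `ℤ^m`: componentwise canonical
representations padded with trailing zeroes to a common length. -/
def canonRepVec (d : ℕ) {m : ℕ} (a : Fin m → ℤ) : List (Fin m → ℤ) :=
  List.ofFn fun j : Fin (Finset.univ.sup fun i => (canonRep d (a i)).length) =>
    fun i => (canonRep d (a i)).getD (j : ℕ) 0

/-- A set `A ⊆ ℤ^m` is `d`-sparse if its language of canonical representations is sparse. -/
def SparseVec (d : ℕ) {m : ℕ} (A : Set (Fin m → ℤ)) : Prop :=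
  SparseLang (canonRepVec d '' A)

/-- An `N`-ladder for a binary relation. -/
def HasLadder {X Y : Type*} (R : X → Y → Prop) (N : ℕ) : Prop :=
  ∃ (a : Fin (N + 1) → X) (b : Fin (N + 1) → Y), ∀ i j, R (a i) (b j) ↔ i ≤ j

/-- A binary relation is stable if for some `N` it admits no `N`-ladder. -/
def StableRel {X Y : Type*} (R : X → Y → Prop) : Prop := ∃ N : ℕ, ¬ HasLadder R N

/-- A subset of an abelian group is stable in the group if `x + y ∈ A` is a stable relation. -/
def StableIn {G : Type*} [AddCommGroup G] (A : Set G) : Prop :=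
  StableRel fun x y : G => x + y ∈ A

/-- `C(a;δ) = {a + d^δ·a + d^{2δ}·a + ⋯ + d^{nδ}·a : n ∈ ℕ}` in `ℤ^m`. -/
def CsetVec (d : ℤ) {m : ℕ} (a : Fin m → ℤ) (δ : ℕ) : Set (Fin m → ℤ) :=
  {x | ∃ n : ℕ, x = ∑ i ∈ Finset.range (n + 1), d ^ (i * δ) • a}

/-- Membership in the Boolean algebra of sets generated by a family `S`. -/
inductive InBoolAlg {X : Type*} (S : Set (Set X)) : Set X → Prop
  | base : ∀ s ∈ S, InBoolAlg S s
  | empty : InBoolAlg S ∅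
  | compl : ∀ s, InBoolAlg S s → InBoolAlg S sᶜ
  | union : ∀ s t, InBoolAlg S s → InBoolAlg S t → InBoolAlg S (s ∪ t)

namespace DSparse

variable {m : ℕ}

/-- The sum `1 + D + ⋯ + D ^ (e - 1)`. -/
def repunit (D : ℤ) (e : ℕ) : ℤ := ∑ i ∈ Finset.range e, D ^ i

lemma repunit_zero (D : ℤ) : repunit D 0 = 0 := by simp [repunit]

lemma repunit_one (D : ℤ) : repunit D 1 = 1 := by simp [repunit]

lemma repunit_add (D : ℤ) (e f : ℕ) :
    repunit D (e + f) = repunit D e + D ^ e * repunit D f := by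
  simp [repunit, Finset.sum_range_add, Finset.mul_sum, pow_add]

lemma repunit_succ (D : ℤ) (e : ℕ) : repunit D (e + 1) = 1 + D * repunit D e := by
  rw [add_comm, repunit_add, repunit_one, pow_one]

lemma pow_eq_repunit (D : ℤ) (e : ℕ) : D ^ e = 1 + (D - 1) * repunit D e := by
  rw [repunit, mul_geom_sum]; ring

/-- The translate `t + S`. -/
def shift (t : Fin m → ℤ) (S : Set (Fin m → ℤ)) : Set (Fin m → ℤ) := {x | x - t ∈ S}

/-- The image of `S` under `y ↦ c + D • y`. -/
def affine (D : ℤ) (c : Fin m → ℤ) (S : Set (Fin m → ℤ)) : Set (Fin m → ℤ) :=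
  {x | ∃ y ∈ S, x = c + D • y}

/-- The set of values in base `D` of the words consisting of some number of letters `v` followed
by a word with value in `S`. -/
def star (D : ℤ) (v : Fin m → ℤ) (S : Set (Fin m → ℤ)) : Set (Fin m → ℤ) :=
  {x | ∃ e : ℕ, ∃ y ∈ S, x = repunit D e • v + D ^ e • y}

/-- The values `x` that, when preceded by `e` letters `b`, give an element of `S`. -/
def residual (D : ℤ) (b : Fin m → ℤ) (e : ℕ) (S : Set (Fin m → ℤ)) : Set (Fin m → ℤ) :=
  {x | repunit D e • b + D ^ e • x ∈ S}

/-- The sets obtained from singletons by finite unions, prepending a letter and prepending an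
arbitrary power of a letter. -/
inductive Ordered (D : ℤ) : Set (Fin m → ℤ) → Prop
  | empty : Ordered D ∅
  | singleton (x : Fin m → ℤ) : Ordered D {x}
  | union {S T : Set (Fin m → ℤ)} : Ordered D S → Ordered D T → Ordered D (S ∪ T)
  | affine (c : Fin m → ℤ) {S : Set (Fin m → ℤ)} : Ordered D S → Ordered D (affine D c S)
  | star (v : Fin m → ℤ) {S : Set (Fin m → ℤ)} : Ordered D S → Ordered D (star D v S)

lemma star_eq (D : ℤ) (v : Fin m → ℤ) (S : Set (Fin m → ℤ)) :
    star D v S = S ∪ affine D v (star D v S) := by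
  ext x
  constructor
  · rintro ⟨e, y, hy, rfl⟩
    cases e with
    | zero => left; simpa [repunit_zero] using hy
    | succ e =>
      right
      refine ⟨_, ⟨e, y, hy, rfl⟩, ?_⟩
      rw [repunit_succ, pow_succ']
      module
  · rintro (hx | ⟨_, ⟨e, y, hy, rfl⟩, rfl⟩)
    · exact ⟨0, x, hx, by simp [repunit_zero]⟩
    · refine ⟨e + 1, y, hy, ?_⟩
      rw [repunit_succ, pow_succ']
      module

lemma shift_union (t : Fin m → ℤ) (S T : Set (Fin m → ℤ)) :
    shift t (S ∪ T) = shift t S ∪ shift t T := rfl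

lemma shift_affine (D : ℤ) (t c : Fin m → ℤ) (S : Set (Fin m → ℤ)) :
    shift t (affine D c S) = affine D (t + c) S := by
  ext x
  constructor <;> rintro ⟨y, hy, h⟩ <;> refine ⟨y, hy, ?_⟩
  · rw [sub_eq_iff_eq_add] at h; rw [h]; abel
  · rw [h]; abel

lemma shift_star (D : ℤ) (t v : Fin m → ℤ) (S : Set (Fin m → ℤ)) :
    shift t (star D v S) = star D (v - (D - 1) • t) (shift t S) := by
  ext x
  constructor
  · rintro ⟨e, y, hy, h⟩
    refine ⟨e, y + t, by simpa [shift] using hy, ?_⟩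
    rw [sub_eq_iff_eq_add] at h
    rw [h, pow_eq_repunit]
    module
  · rintro ⟨e, y, hy, rfl⟩
    refine ⟨e, y - t, hy, ?_⟩
    rw [pow_eq_repunit]
    module

lemma Ordered.shift {D : ℤ} {S : Set (Fin m → ℤ)} (h : Ordered D S) (t : Fin m → ℤ) :
    Ordered D (shift t S) := by
  induction h with
  | empty => exact Ordered.empty
  | singleton x =>
    have : DSparse.shift t {x} = {x + t} := by
      ext y; simp [DSparse.shift, sub_eq_iff_eq_add]
    rw [this]; exact Ordered.singleton _
  | union _ _ h₁ h₂ => exact h₁.union h₂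
  | affine c h _ => rw [shift_affine]; exact h.affine _
  | star v _ ih => rw [shift_star]; exact ih.star _

lemma residual_union (D : ℤ) (b : Fin m → ℤ) (e : ℕ) (S T : Set (Fin m → ℤ)) :
    residual D b e (S ∪ T) = residual D b e S ∪ residual D b e T := rfl

lemma residual_add (D : ℤ) (b : Fin m → ℤ) (e f : ℕ) (S : Set (Fin m → ℤ)) :
    residual D b (e + f) S = residual D b f (residual D b e S) := by
  ext x
  have : repunit D (e + f) • b + D ^ (e + f) • x
      = repunit D e • b + D ^ e • (repunit D f • b + D ^ f • x) := by
    rw [repunit_add, pow_add]; module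
  simp only [residual, Set.mem_ofPred_eq, this]

lemma residual_zero (D : ℤ) (b : Fin m → ℤ) (S : Set (Fin m → ℤ)) : residual D b 0 S = S := by
  ext x; simp [residual, repunit_zero]

lemma mem_residual_one (D : ℤ) (b x : Fin m → ℤ) (S : Set (Fin m → ℤ)) :
    x ∈ residual D b 1 S ↔ b + D • x ∈ S := by
  simp [residual, repunit_one]

lemma residual_affine {D : ℤ} (hD : D ≠ 0) (b c : Fin m → ℤ) (S : Set (Fin m → ℤ)) :
    residual D b 1 (affine D c S) = ∅ ∨
      ∃ t, D • t = c - b ∧ residual D b 1 (affine D c S) = shift t S := by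
  by_cases h : ∃ t, D • t = c - b
  · obtain ⟨t, ht⟩ := h
    refine .inr ⟨t, ht, ?_⟩
    ext x
    rw [mem_residual_one]
    constructor
    · rintro ⟨y, hy, h⟩
      have : D • (x - t) = D • y := by
        rw [smul_sub, ht, ← add_sub_cancel_left b (D • x), h]; abel
      rw [DSparse.shift, Set.mem_ofPred_eq, smul_right_injective _ hD this]
      exact hy
    · intro hx
      refine ⟨_, hx, ?_⟩
      rw [smul_sub, ht]; abel
  · left
    rw [Set.eq_empty_iff_forall_notMem]
    intro x hx
    rw [mem_residual_one] at hx
    obtain ⟨y, -, hxy⟩ := hx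
    refine h ⟨x - y, ?_⟩
    rw [smul_sub, ← add_sub_cancel_left b (D • x), hxy]; abel

lemma Ordered.residual_one {D : ℤ} (hD : D ≠ 0) {S : Set (Fin m → ℤ)} (h : Ordered D S)
    (b : Fin m → ℤ) : Ordered D (residual D b 1 S) := by
  have key : ∀ c {S : Set (Fin m → ℤ)}, Ordered D S →
      Ordered D (residual D b 1 (DSparse.affine D c S)) := by
    intro c S h
    rcases residual_affine hD b c S with h' | ⟨t, -, h'⟩ <;> rw [h']
    · exact Ordered.empty
    · exact h.shift t
  induction h with
  | empty => exact Ordered.empty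
  | singleton x =>
    have : ({x} : Set (Fin m → ℤ)) = DSparse.affine D x {0} := by
      ext y; simp [DSparse.affine]
    rw [this]
    exact key x (Ordered.singleton 0)
  | union _ _ h₁ h₂ => exact h₁.union h₂
  | affine c h _ => exact key c h
  | star v h ih =>
    rw [star_eq, residual_union]
    exact ih.union (key v (h.star v))

lemma Ordered.residual {D : ℤ} (hD : D ≠ 0) {S : Set (Fin m → ℤ)} (h : Ordered D S)
    (b : Fin m → ℤ) (e : ℕ) : Ordered D (residual D b e S) := by
  induction e with
  | zero => rwa [residual_zero]
  | succ e ih => rw [residual_add]; exact ih.residual_one hD b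

/-- The residuals of `S` along powers of the letter `b` are eventually constant. -/
def EvConst (D : ℤ) (b : Fin m → ℤ) (S : Set (Fin m → ℤ)) : Prop :=
  ∃ (E : ℕ) (L : Set (Fin m → ℤ)), ∀ e ≥ E, residual D b e S = L

lemma EvConst.union {D : ℤ} {b : Fin m → ℤ} {S T : Set (Fin m → ℤ)} (hS : EvConst D b S)
    (hT : EvConst D b T) : EvConst D b (S ∪ T) := by
  obtain ⟨E, L, h⟩ := hS
  obtain ⟨E', L', h'⟩ := hT
  refine ⟨max E E', L ∪ L', fun e he => ?_⟩
  rw [residual_union, h e (le_of_max_le_left he), h' e (le_of_max_le_right he)]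

lemma evConst_empty (D : ℤ) (b : Fin m → ℤ) : EvConst D b ∅ := ⟨0, ∅, fun _ _ => rfl⟩

lemma evConst_residual_one_iff {D : ℤ} {b : Fin m → ℤ} {S : Set (Fin m → ℤ)} :
    EvConst D b (residual D b 1 S) ↔ EvConst D b S := by
  constructor
  · rintro ⟨E, L, h⟩
    refine ⟨1 + E, L, fun e he => ?_⟩
    obtain ⟨f, rfl⟩ := Nat.exists_eq_add_of_le he
    rw [add_assoc, residual_add]
    exact h _ (by omega)
  · rintro ⟨E, L, h⟩
    refine ⟨E, L, fun e he => ?_⟩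
    rw [← residual_add]
    exact h _ (by omega)

/-- A family of sets indexed by translations is eventually constant along powers of `b` if one
step changes the translation by a contraction, up to an eventually constant set. -/
lemma evConst_of_step {D : ℤ} (hD : 2 ≤ D) (b u : Fin m → ℤ)
    (X Y : (Fin m → ℤ) → Set (Fin m → ℤ)) (hY : ∀ t, EvConst D b (Y t))
    (hX : ∀ t, residual D b 1 (X t) = residual D b 1 (Y t) ∪ {x | ∃ t', D • t' = t + u ∧ x ∈ X t'})
    (t : Fin m → ℤ) : EvConst D b (X t) := by
  have hD0 : D ≠ 0 := by omega
  induction hn : ∑ i, ((D - 1) * t i - u i).natAbs using Nat.strong_induction_on generalizing t with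
  | _ n ih =>
  by_cases ht : ∃ t', D • t' = t + u
  · obtain ⟨t', ht'⟩ := ht
    have hset : {x | ∃ t', D • t' = t + u ∧ x ∈ X t'} = X t' := by
      ext x
      constructor
      · rintro ⟨s, hs, hx⟩
        rwa [← smul_right_injective _ hD0 (hs.trans ht'.symm)]
      · exact fun hx => ⟨t', ht', hx⟩
    have hstep := hX t
    rw [hset] at hstep
    have hcoord : ∀ i, (D - 1) * t i - u i = D * ((D - 1) * t' i - u i) := by
      intro i
      have := congrFun ht' i
      simp only [Pi.smul_apply, smul_eq_mul, Pi.add_apply] at this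
      linear_combination (-(D - 1)) * this
    by_cases h0 : t' = t
    · subst h0
      obtain ⟨E, L, h⟩ := evConst_residual_one_iff.2 (hY t')
      have hs : ∀ e ≥ E, residual D b (e + 1) (X t') = L ∪ residual D b e (X t') := by
        intro e he
        rw [add_comm, residual_add, hstep, residual_union, h e he]
      refine ⟨E + 1, residual D b (E + 1) (X t'), fun e he => ?_⟩
      induction e, he using Nat.le_induction with
      | base => rfl
      | succ e he ihe =>
        rw [hs e (by omega), ihe, hs E le_rfl, ← Set.union_assoc, Set.union_self]
    · rw [← evConst_residual_one_iff, hstep]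
      refine (evConst_residual_one_iff.2 (hY t)).union (ih _ ?_ t' rfl)
      rw [← hn]
      have hle : ∀ i, ((D - 1) * t' i - u i).natAbs ≤ ((D - 1) * t i - u i).natAbs := by
        intro i
        rw [hcoord i, Int.natAbs_mul]
        exact Nat.le_mul_of_pos_left _ (by omega)
      obtain ⟨i, hi⟩ : ∃ i, t' i ≠ t i := Function.ne_iff.1 h0
      refine Finset.sum_lt_sum (fun i _ => hle i) ⟨i, Finset.mem_univ i, ?_⟩
      rw [hcoord i, Int.natAbs_mul]
      have hne : (D - 1) * t' i - u i ≠ 0 := by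
        intro hz
        have h1 := congrFun ht' i
        simp only [Pi.smul_apply, smul_eq_mul, Pi.add_apply] at h1
        exact hi (by linear_combination h1 - hz)
      have : 0 < ((D - 1) * t' i - u i).natAbs := Int.natAbs_pos.2 hne
      have : 2 ≤ D.natAbs := by omega
      nlinarith
  · have hset : {x | ∃ t', D • t' = t + u ∧ x ∈ X t'} = ∅ := by
      rw [Set.eq_empty_iff_forall_notMem]
      rintro x ⟨t', h, -⟩
      exact ht ⟨t', h⟩
    rw [← evConst_residual_one_iff, hX t, hset, Set.union_empty]
    exact evConst_residual_one_iff.2 (hY t)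

lemma Ordered.evConst_shift {D : ℤ} (hD : 2 ≤ D) {S : Set (Fin m → ℤ)} (h : Ordered D S)
    (b t : Fin m → ℤ) : EvConst D b (DSparse.shift t S) := by
  have hD0 : D ≠ 0 := by omega
  induction h generalizing t with
  | empty => exact evConst_empty D b
  | singleton x =>
    refine evConst_of_step hD b (x - b - D • x) (fun t => DSparse.shift t {x}) (fun _ => ∅)
      (fun _ => evConst_empty D b) (fun t => ?_) t
    ext y
    simp only [Set.mem_union, mem_residual_one, DSparse.shift, Set.mem_ofPred_eq,
      Set.mem_singleton_iff, Set.mem_empty_iff_false, false_or]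
    constructor
    · intro h
      refine ⟨y - x, ?_, by abel⟩
      rw [smul_sub, ← h]; abel
    · rintro ⟨t', h, h'⟩
      obtain rfl := sub_eq_iff_eq_add.1 h'
      rw [smul_add, h]; abel
  | union _ _ h₁ h₂ => exact (h₁ t).union (h₂ t)
  | @affine c S h ih =>
    rw [shift_affine, ← evConst_residual_one_iff]
    rcases residual_affine hD0 b (t + c) S with h' | ⟨t, -, h'⟩ <;> rw [h']
    · exact evConst_empty D b
    · exact ih t
  | @star v S h ih =>
    refine evConst_of_step hD b (v - b) (fun t => DSparse.shift t (DSparse.star D v S))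
      (fun t => DSparse.shift t S) ih (fun t => ?_) t
    conv_lhs => rw [star_eq, shift_union, residual_union, shift_affine]
    congr 1
    rcases residual_affine hD0 b (t + v) (DSparse.star D v S) with h' | ⟨s, hs, h'⟩
    · ext x
      rw [h']
      simp only [Set.mem_empty_iff_false, false_iff]
      rintro ⟨t', ht', hx⟩
      rw [Set.eq_empty_iff_forall_notMem] at h'
      refine h' x ?_
      rw [mem_residual_one]
      refine ⟨_, hx, ?_⟩
      rw [smul_sub, ht']; abel
    · ext x
      rw [h']
      constructor
      · exact fun hx => ⟨s, by rw [hs]; abel, hx⟩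
      · rintro ⟨t', ht', hx⟩
        have : t' = s := smul_right_injective _ hD0
          (show D • t' = D • s by rw [ht', hs]; abel)
        rwa [← this]

lemma Ordered.evConst {D : ℤ} (hD : 2 ≤ D) {S : Set (Fin m → ℤ)} (h : Ordered D S)
    (b : Fin m → ℤ) : EvConst D b S := by
  have := h.evConst_shift hD b 0
  simpa [DSparse.shift] using this

/-- The value `∑ repunit D f • a` of a list of pairs `(a, f)`. -/
def value (D : ℤ) (l : List ((Fin m → ℤ) × ℕ)) : Fin m → ℤ :=
  (l.map fun p => repunit D p.2 • p.1).sum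

/-- The set of all `∑ repunit D f • a`, where `a` runs through `as` and the exponents `f` are
independent of each other. -/
def free (D : ℤ) (as : List (Fin m → ℤ)) : Set (Fin m → ℤ) :=
  {x | ∃ l : List ((Fin m → ℤ) × ℕ), l.map Prod.fst = as ∧ x = value D l}

lemma value_cons (D : ℤ) (p : (Fin m → ℤ) × ℕ) (l : List ((Fin m → ℤ) × ℕ)) :
    value D (p :: l) = repunit D p.2 • p.1 + value D l := by
  simp [value]

lemma value_perm (D : ℤ) {l l' : List ((Fin m → ℤ) × ℕ)} (h : l.Perm l') :
    value D l = value D l' := (h.map _).sum_eq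

/-- Raising all exponents by `e`. -/
lemma value_add (D : ℤ) (e : ℕ) (l : List ((Fin m → ℤ) × ℕ)) :
    value D (l.map fun p => (p.1, e + p.2)) =
      repunit D e • (l.map Prod.fst).sum + D ^ e • value D l := by
  induction l with
  | nil => simp [value]
  | cons p l ih =>
    rw [List.map_cons, value_cons, ih, value_cons, List.map_cons, List.sum_cons, repunit_add]
    module

/-- Every set in the class `Ordered` is covered by finitely many translates of sets `free`. -/
lemma Ordered.exists_cover {D : ℤ} {S : Set (Fin m → ℤ)} (h : Ordered D S) :
    ∃ F : List ((Fin m → ℤ) × List (Fin m → ℤ)),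
      S ⊆ {x | ∃ p ∈ F, x ∈ DSparse.shift p.1 (free D p.2)} := by
  induction h with
  | empty => exact ⟨[], by simp⟩
  | singleton x =>
    refine ⟨[(x, [])], ?_⟩
    rintro _ rfl
    exact ⟨_, List.mem_singleton_self _, [], rfl, by simp [value]⟩
  | union _ _ h₁ h₂ =>
    obtain ⟨F, hF⟩ := h₁
    obtain ⟨G, hG⟩ := h₂
    refine ⟨F ++ G, ?_⟩
    rintro x (hx | hx)
    · obtain ⟨p, hp, h⟩ := hF hx
      exact ⟨p, List.mem_append_left _ hp, h⟩
    · obtain ⟨p, hp, h⟩ := hG hx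
      exact ⟨p, List.mem_append_right _ hp, h⟩
  | affine c _ ih =>
    obtain ⟨F, hF⟩ := ih
    refine ⟨F.map fun p => (c + D • p.1 - p.2.sum, p.2), ?_⟩
    rintro x ⟨y, hy, rfl⟩
    obtain ⟨p, hp, l, hl, h⟩ := hF hy
    refine ⟨_, List.mem_map_of_mem hp, l.map fun p => (p.1, 1 + p.2), ?_, ?_⟩
    · simpa [Function.comp_def] using hl
    · rw [value_add, hl, repunit_one, pow_one, ← h]
      module
  | star v _ ih =>
    obtain ⟨F, hF⟩ := ih
    refine ⟨F.map fun p => (p.1, (v + (D - 1) • p.1 - p.2.sum) :: p.2), ?_⟩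
    rintro x ⟨e, y, hy, rfl⟩
    obtain ⟨p, hp, l, hl, h⟩ := hF hy
    refine ⟨_, List.mem_map_of_mem hp,
      (v + (D - 1) • p.1 - p.2.sum, e) :: l.map fun p => (p.1, e + p.2), ?_, ?_⟩
    · simpa [Function.comp_def] using hl
    · rw [value_cons, value_add, hl, ← h, pow_eq_repunit]
      module

/-- The successive exponents in `l` have gaps at least `T`, starting from `p`. -/
def Gap (T : ℕ) : ℕ → List ((Fin m → ℤ) × ℕ) → Prop
  | _, [] => True
  | p, q :: l => p + T ≤ q.2 ∧ Gap T q.2 l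

lemma Gap.mono {T T' p p' : ℕ} (hT : T' ≤ T) (hp : p' ≤ p) :
    ∀ {l : List ((Fin m → ℤ) × ℕ)}, Gap T p l → Gap T' p' l
  | [], _ => trivial
  | _ :: _, h => ⟨by have := h.1; omega, Gap.mono hT le_rfl h.2⟩

lemma exists_gap (T : ℕ) (as : List (Fin m → ℤ)) (p : ℕ) :
    ∃ l : List ((Fin m → ℤ) × ℕ), l.map Prod.fst = as ∧ Gap T p l := by
  induction as generalizing p with
  | nil => exact ⟨[], rfl, trivial⟩
  | cons a as ih =>
    obtain ⟨l, hl, h⟩ := ih (p + T)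
    exact ⟨(a, p + T) :: l, by simp [hl], le_rfl, h⟩

lemma value_sub_of_gap (D : ℤ) {T p e : ℕ} {l : List ((Fin m → ℤ) × ℕ)} (h : Gap T (p + e) l) :
    value D (l.map fun q => (q.1, q.2 - p)) =
      repunit D e • (l.map Prod.fst).sum +
        D ^ e • value D (l.map fun q => (q.1, q.2 - (p + e))) := by
  have key : ∀ {p' : ℕ} {l : List ((Fin m → ℤ) × ℕ)}, p + e ≤ p' → Gap T p' l →
      (l.map fun q => (q.1, q.2 - p)) =
        (l.map fun q => (q.1, q.2 - (p + e))).map fun q => (q.1, e + q.2) := by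
    intro p' l hp hl
    induction l generalizing p' with
    | nil => rfl
    | cons q l ih =>
      have := hl.1
      rw [List.map_cons, List.map_cons, List.map_cons, ih (by omega) hl.2]
      congr 2
      omega
  rw [key le_rfl h, value_add, List.map_map]
  rfl

/-- The eventual value of the residuals of `S` along powers of `b`. -/
def limResidual (D : ℤ) (b : Fin m → ℤ) (S : Set (Fin m → ℤ)) : Set (Fin m → ℤ) :=
  {x | ∃ E, ∀ e ≥ E, x ∈ residual D b e S}

lemma EvConst.exists_eq_limResidual {D : ℤ} {b : Fin m → ℤ} {S : Set (Fin m → ℤ)}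
    (h : EvConst D b S) : ∃ E, ∀ e ≥ E, residual D b e S = limResidual D b S := by
  obtain ⟨E, L, h⟩ := h
  refine ⟨E, fun e he => ?_⟩
  rw [h e he]
  ext x
  constructor
  · exact fun hx => ⟨E, fun e he => by rwa [h e he]⟩
  · rintro ⟨E', h'⟩
    rw [← h _ (le_max_left E E')]
    exact h' _ (le_max_right E E')

/-- The truth value of `value D l ∈ S` for all lists `l` with first components `as` and
sufficiently large gaps between the second components. -/
def Generic (D : ℤ) : List (Fin m → ℤ) → Set (Fin m → ℤ) → Prop
  | [], S => 0 ∈ S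
  | a :: as, S => Generic D as (limResidual D (a :: as).sum S)

lemma Ordered.exists_generic {D : ℤ} (hD : 2 ≤ D) (as : List (Fin m → ℤ)) {S : Set (Fin m → ℤ)}
    (h : Ordered D S) : ∃ T, ∀ (p : ℕ) (l : List ((Fin m → ℤ) × ℕ)), l.map Prod.fst = as →
      Gap T p l → (value D (l.map fun q => (q.1, q.2 - p)) ∈ S ↔ Generic D as S) := by
  induction as generalizing S with
  | nil =>
    refine ⟨0, fun p l hl _ => ?_⟩
    obtain rfl := List.map_eq_nil_iff.1 hl
    simp [value, Generic]
  | cons a as ih =>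
    obtain ⟨E, hE⟩ := (h.evConst hD (a :: as).sum).exists_eq_limResidual
    obtain ⟨T, hT⟩ := ih (S := limResidual D (a :: as).sum S)
      (by rw [← hE E le_rfl]; exact h.residual (by omega) _ _)
    refine ⟨max E T, fun p l hl hg => ?_⟩
    obtain _ | ⟨q, l⟩ := l
    · simp at hl
    obtain ⟨hg₁, hg₂⟩ := hg
    rw [List.map_cons, List.cons.injEq] at hl
    obtain ⟨rfl, rfl⟩ := hl
    obtain ⟨e, he⟩ := Nat.exists_eq_add_of_le (show p ≤ q.2 by omega)
    have hl' := hT q.2 l rfl (hg₂.mono (le_max_right _ _) le_rfl)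
    rw [Generic, ← hl', ← hE e (by omega), he, DSparse.residual, Set.mem_ofPred_eq, List.map_cons,
      value_cons, value_sub_of_gap D (he ▸ hg₂), he, List.sum_cons, Nat.add_sub_cancel_left]
    rw [smul_add, add_assoc]

lemma stableIn_residual {D : ℤ} {b : Fin m → ℤ} {e : ℕ} {S : Set (Fin m → ℤ)} (h : StableIn S) :
    StableIn (residual D b e S) := by
  obtain ⟨N, hN⟩ := h
  refine ⟨N, fun ⟨x, y, hxy⟩ => hN
    ⟨fun i => repunit D e • b + D ^ e • x i, fun i => D ^ e • y i, fun i j => ?_⟩⟩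
  rw [← hxy]
  simp only [DSparse.residual, Set.mem_ofPred_eq, smul_add, add_assoc]

lemma stableIn_shift {t : Fin m → ℤ} {S : Set (Fin m → ℤ)} (h : StableIn S) :
    StableIn (DSparse.shift t S) := by
  obtain ⟨N, hN⟩ := h
  refine ⟨N, fun ⟨x, y, hxy⟩ => hN ⟨fun i => x i - t, y, fun i j => ?_⟩⟩
  rw [← hxy]
  simp only [DSparse.shift, Set.mem_ofPred_eq, sub_add_eq_add_sub]

lemma generic_swap {D : ℤ} (hD : 2 ≤ D) {S : Set (Fin m → ℤ)} (h : Ordered D S) (hS : StableIn S)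
    (a b : Fin m → ℤ) (as : List (Fin m → ℤ)) (hab : Generic D (a :: b :: as) S) :
    Generic D (b :: a :: as) S := by
  by_contra hba
  obtain ⟨T₁, h₁⟩ := h.exists_generic hD (a :: b :: as)
  obtain ⟨T₂, h₂⟩ := h.exists_generic hD (b :: a :: as)
  obtain ⟨N, hN⟩ := hS
  set T := max T₁ T₂ with hT
  obtain ⟨l, rfl, hl⟩ := exists_gap T as (T * (2 * N + 3))
  refine hN ⟨fun i => repunit D (T * (2 * i + 1)) • a + value D l,
    fun j => repunit D (T * (2 * j + 2)) • b, fun i j => ?_⟩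
  have hi : (i : ℕ) ≤ N := by omega
  have hj : (j : ℕ) ≤ N := by omega
  have hgap : ∀ k ≤ 2 * N + 2, Gap T (T * k) l := fun k hk =>
    hl.mono le_rfl (Nat.mul_le_mul_left _ (by omega))
  have hlt : ∀ k k', k < k' → T * k + T ≤ T * k' := fun k k' hk => by
    rw [← Nat.mul_succ]; exact Nat.mul_le_mul_left _ hk
  rcases le_or_gt i j with hij | hij
  · have := h₁ 0 ((a, T * (2 * i + 1)) :: (b, T * (2 * j + 2)) :: l) rfl
      (Gap.mono (T := T) (le_max_left _ _) le_rfl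
        ⟨by simpa using hlt 0 (2 * i + 1) (by omega),
          hlt _ _ (by have : (i : ℕ) ≤ j := hij; omega), hgap _ (by omega)⟩)
    simp only [hij, iff_true]
    simp only [Nat.sub_zero, Prod.mk.eta, List.map_id', value_cons] at this
    convert this.2 hab using 1
    abel
  · have := h₂ 0 ((b, T * (2 * j + 2)) :: (a, T * (2 * i + 1)) :: l) rfl
      (Gap.mono (T := T) (le_max_right _ _) le_rfl
        ⟨by simpa using hlt 0 (2 * j + 2) (by omega),
          hlt _ _ (by have : (j : ℕ) < i := hij; omega), hgap _ (by omega)⟩)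
    simp only [hij.not_ge, iff_false]
    simp only [Nat.sub_zero, Prod.mk.eta, List.map_id', value_cons] at this
    intro hmem
    refine hba (this.1 ?_)
    convert hmem using 1
    abel

lemma generic_perm {D : ℤ} (hD : 2 ≤ D) {as bs : List (Fin m → ℤ)} (hp : as.Perm bs)
    {S : Set (Fin m → ℤ)} (h : Ordered D S) (hS : StableIn S) :
    Generic D as S ↔ Generic D bs S := by
  induction hp generalizing S with
  | nil => rfl
  | @cons a as bs hp ih =>
    rw [Generic, Generic, List.sum_cons, List.sum_cons, hp.sum_eq]
    obtain ⟨E, hE⟩ := (h.evConst hD (a + bs.sum)).exists_eq_limResidual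
    rw [← hE E le_rfl]
    exact ih (h.residual (by omega) _ _) (stableIn_residual hS)
  | swap a b as => exact ⟨generic_swap hD h hS _ _ _, generic_swap hD h hS _ _ _⟩
  | trans _ _ ih₁ ih₂ => exact (ih₁ h hS).trans (ih₂ h hS)

/-- The translates of finite Minkowski sums of sets `CsetVec d a δ`. -/
def generators (d : ℕ) (m : ℕ) : Set (Set (Fin m → ℤ)) :=
  {S : Set (Fin m → ℤ) | ∃ (k : ℕ) (β : Fin m → ℤ) (a : Fin k → (Fin m → ℤ)) (δ : Fin k → ℕ),
    (∀ i, 1 ≤ δ i) ∧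
    S = {x | ∃ c : Fin k → (Fin m → ℤ),
      (∀ i, c i ∈ CsetVec d (a i) (δ i)) ∧ x = β + ∑ i : Fin k, c i}}

lemma inBoolAlg_inter {X : Type*} {F : Set (Set X)} {S T : Set X} (hS : InBoolAlg F S)
    (hT : InBoolAlg F T) : InBoolAlg F (S ∩ T) := by
  have := (hS.compl.union _ _ hT.compl).compl
  rwa [Set.compl_union, compl_compl, compl_compl] at this

lemma inBoolAlg_iUnion {X ι : Type*} {F : Set (Set X)} (s : List ι) (f : ι → Set X)
    (h : ∀ i ∈ s, InBoolAlg F (f i)) : InBoolAlg F {x | ∃ i ∈ s, x ∈ f i} := by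
  induction s with
  | nil => simpa using InBoolAlg.empty
  | cons i s ih =>
    have : {x | ∃ j ∈ i :: s, x ∈ f j} = f i ∪ {x | ∃ j ∈ s, x ∈ f j} := by ext; simp
    rw [this]
    exact .union _ _ (h i (by simp)) (ih fun j hj => h j (by simp [hj]))

/-- The Minkowski sum of the sets `CsetVec d a δ` for `a ∈ as`. -/
def csetSum (d : ℤ) (δ : ℕ) : List (Fin m → ℤ) → Set (Fin m → ℤ)
  | [] => {0}
  | a :: as => {x | ∃ c ∈ CsetVec d a δ, ∃ y ∈ csetSum d δ as, x = c + y}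

lemma mem_csetSum (d : ℤ) (δ : ℕ) (as : List (Fin m → ℤ)) (x : Fin m → ℤ) :
    x ∈ csetSum d δ as ↔ ∃ c : Fin as.length → (Fin m → ℤ),
      (∀ i, c i ∈ CsetVec d (as.get i) δ) ∧ x = ∑ i, c i := by
  induction as generalizing x with
  | nil => simp [csetSum]
  | cons a as ih =>
    simp only [csetSum, Set.mem_ofPred_eq]
    constructor
    · rintro ⟨c, hc, y, hy, rfl⟩
      obtain ⟨c', hc', rfl⟩ := (ih y).1 hy
      refine ⟨Fin.cons c c', fun i => ?_, ?_⟩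
      · refine Fin.cases ?_ (fun i => ?_) i
        · exact hc
        · exact hc' i
      · exact (Fin.sum_cons c c').symm
    · rintro ⟨c, hc, rfl⟩
      exact ⟨c 0, hc 0, _, (ih _).2 ⟨fun i => c i.succ, fun i => hc i.succ, rfl⟩,
        Fin.sum_univ_succ c⟩

lemma inBoolAlg_shift_csetSum (d : ℕ) {δ : ℕ} (hδ : 1 ≤ δ) (β : Fin m → ℤ)
    (as : List (Fin m → ℤ)) :
    InBoolAlg (generators d m) (shift β (csetSum d δ as)) := by
  refine .base _ ⟨as.length, β, as.get, fun _ => δ, fun _ => hδ, ?_⟩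
  ext x
  rw [shift, Set.mem_ofPred_eq, mem_csetSum]
  simp only [sub_eq_iff_eq_add', Set.mem_ofPred_eq]

lemma mem_csetVec_iff (d : ℤ) (δ : ℕ) (a x : Fin m → ℤ) :
    x ∈ CsetVec d a δ ↔ ∃ n, x = repunit (d ^ δ) (n + 1) • a := by
  simp only [CsetVec, Set.mem_ofPred_eq, repunit, Finset.sum_smul, ← pow_mul, mul_comm δ]

lemma mem_free_cons (D : ℤ) (a : Fin m → ℤ) (as : List (Fin m → ℤ)) (x : Fin m → ℤ) :
    x ∈ free D (a :: as) ↔ ∃ f, ∃ y ∈ free D as, x = repunit D f • a + y := by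
  constructor
  · rintro ⟨_ | ⟨p, l⟩, hl, rfl⟩
    · simp at hl
    · rw [List.map_cons, List.cons.injEq] at hl
      obtain ⟨rfl, rfl⟩ := hl
      exact ⟨p.2, _, ⟨l, rfl, rfl⟩, value_cons D p l⟩
  · rintro ⟨f, _, ⟨l, rfl, rfl⟩, rfl⟩
    exact ⟨(a, f) :: l, rfl, (value_cons D (a, f) l).symm⟩

lemma inBoolAlg_shift_free (d : ℕ) {δ : ℕ} (hδ : 1 ≤ δ) (β : Fin m → ℤ)
    (as : List (Fin m → ℤ)) :
    InBoolAlg (generators d m) (shift β (free ((d : ℤ) ^ δ) as)) := by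
  suffices h : ∀ bs as : List (Fin m → ℤ), InBoolAlg (generators d m)
      {x | ∃ y ∈ csetSum (d : ℤ) δ bs, x ∈ shift (β + y) (free ((d : ℤ) ^ δ) as)} by
    simpa [csetSum] using h [] as
  intro bs as
  induction as generalizing bs with
  | nil =>
    convert inBoolAlg_shift_csetSum d hδ β bs using 1
    ext x
    have h0 : ∀ z, z ∈ free ((d : ℤ) ^ δ) ([] : List (Fin m → ℤ)) ↔ z = 0 := by
      simp [free, value]
    simp only [shift, h0, Set.mem_ofPred_eq, sub_eq_zero, ← sub_eq_iff_eq_add',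
      exists_eq_right']
  | cons a as ih =>
    convert (ih bs).union _ _ (ih (a :: bs)) using 1
    ext x
    simp only [shift, mem_free_cons, csetSum, Set.mem_ofPred_eq, Set.mem_union, mem_csetVec_iff]
    constructor
    · rintro ⟨y, hy, f, z, hz, h⟩
      obtain rfl : x = β + y + repunit ((d : ℤ) ^ δ) f • a + z := by
        rw [add_assoc, ← h]; abel
      cases f with
      | zero => exact .inl ⟨y, hy, by simpa [repunit_zero] using hz⟩
      | succ f =>
        refine .inr ⟨_, ⟨_, ⟨f, rfl⟩, y, hy, rfl⟩, ?_⟩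
        convert hz using 1
        abel
    · rintro (⟨y, hy, h⟩ | ⟨_, ⟨_, ⟨n, rfl⟩, y, hy, rfl⟩, h⟩)
      · exact ⟨y, hy, 0, _, h, by simp [repunit_zero]⟩
      · exact ⟨y, hy, n + 1, _, h, by abel⟩

lemma exists_of_not_gap {T p : ℕ} {l : List ((Fin m → ℤ) × ℕ)}
    (hl : l.Pairwise fun q r => q.2 ≤ r.2) (hp : ∀ q ∈ l, p ≤ q.2) (h : ¬ Gap T p l) :
    (∃ a c l', c < T ∧ l.Perm ((a, p + c) :: l')) ∨
      ∃ a b f c l', c < T ∧ l.Perm ((a, f) :: (b, f + c) :: l') := by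
  induction l generalizing p with
  | nil => exact absurd trivial h
  | cons q l ih =>
    rw [List.pairwise_cons] at hl
    have hpq : p ≤ q.2 := hp q (by simp)
    by_cases hq : p + T ≤ q.2
    · rcases ih hl.2 hl.1 fun hg => h ⟨hq, hg⟩ with ⟨a, c, l', hc, h'⟩ | ⟨a, b, f, c, l', hc, h'⟩
      · exact .inr ⟨q.1, a, q.2, c, l', hc, h'.cons q⟩
      · exact .inr ⟨a, b, f, c, q :: l', hc, (h'.cons q).trans
          ((List.Perm.swap _ _ _).trans ((List.Perm.swap _ _ _).cons _))⟩
    · refine .inl ⟨q.1, q.2 - p, l, by omega, ?_⟩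
      rw [Nat.add_sub_cancel' hpq]

/-- The finitely many sets that contain the values with small gaps. -/
def degenerate (D : ℤ) (T : ℕ) (as : List (Fin m → ℤ)) :
    List ((Fin m → ℤ) × List (Fin m → ℤ)) :=
  as.permutations.flatMap fun bs => (List.range T).flatMap fun c =>
    match bs with
    | [] => []
    | a :: bs => (repunit D c • a, bs) ::
      match bs with
      | [] => []
      | b :: bs => [(repunit D c • b, (a + D ^ c • b) :: bs)]

lemma length_lt_of_mem_degenerate {D : ℤ} {T : ℕ} {as : List (Fin m → ℤ)}
    {p : (Fin m → ℤ) × List (Fin m → ℤ)} (hp : p ∈ degenerate D T as) :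
    p.2.length < as.length := by
  simp only [degenerate, List.mem_flatMap, List.mem_permutations] at hp
  obtain ⟨bs, hbs, c, -, hp⟩ := hp
  rw [← hbs.length_eq]
  rcases bs with _ | ⟨a, _ | ⟨b, bs⟩⟩
  · simp at hp
  · simp at hp; simp [hp]
  · simp at hp
    rcases hp with rfl | rfl <;> simp

lemma mem_degenerate_of_not_gap {D : ℤ} {T : ℕ} {l : List ((Fin m → ℤ) × ℕ)}
    (hl : l.Pairwise fun q r => q.2 ≤ r.2) (h : ¬ Gap T 0 l) :
    ∃ p ∈ degenerate D T (l.map Prod.fst), value D l ∈ shift p.1 (free D p.2) := by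
  simp only [degenerate, List.mem_flatMap, List.mem_permutations, List.mem_range]
  rcases exists_of_not_gap hl (fun q _ => q.2.zero_le) h with
    ⟨a, c, l', hc, h'⟩ | ⟨a, b, f, c, l', hc, h'⟩
  · refine ⟨_, ⟨_, (h'.map Prod.fst).symm, c, hc, List.mem_cons_self⟩, l', rfl, ?_⟩
    rw [value_perm D h', value_cons, zero_add, add_sub_cancel_left]
  · refine ⟨_, ⟨_, (h'.map Prod.fst).symm, c, hc,
      List.mem_cons_of_mem _ (List.mem_singleton_self _)⟩, (a + D ^ c • b, f) :: l', rfl, ?_⟩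
    rw [value_perm D h', value_cons, value_cons, value_cons, add_comm f c, repunit_add]
    module

lemma inBoolAlg_inter_shift_free {d : ℕ} (hd : 2 ≤ d) {δ : ℕ} (hδ : 1 ≤ δ)
    {A : Set (Fin m → ℤ)} (hA : Ordered ((d : ℤ) ^ δ) A) (hst : StableIn A) (β : Fin m → ℤ)
    (as : List (Fin m → ℤ)) :
    InBoolAlg (generators d m) (A ∩ shift β (free ((d : ℤ) ^ δ) as)) := by
  have hD : 2 ≤ (d : ℤ) ^ δ := by
    have : (d : ℤ) ^ 1 ≤ (d : ℤ) ^ δ := pow_le_pow_right₀ (by omega) hδ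
    rw [pow_one] at this
    omega
  induction hn : as.length using Nat.strong_induction_on generalizing β as with
  | _ n ih =>
  set D := (d : ℤ) ^ δ with hDdef
  have hA' : Ordered D (shift (-β) A) := hA.shift _
  have hst' : StableIn (shift (-β) A) := stableIn_shift hst
  obtain ⟨T, hT⟩ : ∃ T, ∀ bs ∈ as.permutations, ∀ l : List ((Fin m → ℤ) × ℕ),
      l.map Prod.fst = bs → Gap T 0 l → (β + value D l ∈ A ↔ Generic D as (shift (-β) A)) := by
    have key : ∀ bs : List (Fin m → ℤ), ∃ T, ∀ l : List ((Fin m → ℤ) × ℕ),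
        l.map Prod.fst = bs → Gap T 0 l → (β + value D l ∈ A ↔ Generic D bs (shift (-β) A)) := by
      intro bs
      obtain ⟨T, hT⟩ := hA'.exists_generic hD bs
      refine ⟨T, fun l hl hg => ?_⟩
      rw [← hT 0 l hl hg]
      simp [shift, add_comm β]
    choose τ hτ using key
    refine ⟨(as.permutations.map τ).sum, fun bs hbs l hl hg => ?_⟩
    rw [hτ bs l hl (hg.mono (List.le_sum_of_mem (List.mem_map_of_mem hbs)) le_rfl)]
    exact generic_perm hD (List.mem_permutations.1 hbs) hA' hst'
  have hdeg : ∀ p ∈ degenerate D T as,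
      InBoolAlg (generators d m) (A ∩ shift (β + p.1) (free D p.2)) := fun p hp =>
    ih _ (hn ▸ length_lt_of_mem_degenerate hp) _ _ rfl
  have hcases : ∀ x ∈ shift β (free D as), (x ∈ A ↔ Generic D as (shift (-β) A)) ∨
      ∃ p ∈ degenerate D T as, x ∈ shift (β + p.1) (free D p.2) := by
    rintro x ⟨l, rfl, hx⟩
    obtain rfl := sub_eq_iff_eq_add'.1 hx
    set l' := l.mergeSort fun q r => q.2 ≤ r.2 with hl'
    have hperm : l'.Perm l := List.mergeSort_perm _ _
    have hsorted : l'.Pairwise fun q r => q.2 ≤ r.2 := by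
      have := List.pairwise_mergeSort (le := fun q r : (Fin m → ℤ) × ℕ => decide (q.2 ≤ r.2))
        (fun a b c => by simpa using le_trans) (fun a b => by simpa using le_total a.2 b.2) l
      simpa using this
    rw [← value_perm D hperm]
    by_cases hg : Gap T 0 l'
    · exact .inl (hT _ (List.mem_permutations.2 (hperm.map _)) l' rfl hg)
    · obtain ⟨p, hp, h⟩ := mem_degenerate_of_not_gap (D := D) hsorted hg
      refine .inr ⟨p, ?_, ?_⟩
      · simp only [degenerate, List.mem_flatMap, List.mem_permutations] at hp ⊢
        obtain ⟨bs, hbs, hp⟩ := hp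
        exact ⟨bs, hbs.trans (hperm.map _), hp⟩
      · simpa [shift, add_sub_add_left_eq_sub] using h
  have hU := inBoolAlg_shift_free d hδ β as
  by_cases hgen : Generic D as (shift (-β) A)
  · convert inBoolAlg_inter hU (inBoolAlg_iUnion (degenerate D T as)
      (fun p => shift (β + p.1) (free D p.2) ∩ (A ∩ shift (β + p.1) (free D p.2))ᶜ)
      fun p hp => inBoolAlg_inter (inBoolAlg_shift_free d hδ _ _) (hdeg p hp).compl).compl using 1
    ext x
    simp only [Set.mem_inter_iff, Set.mem_compl_iff, Set.mem_ofPred_eq, not_exists, not_and]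
    constructor
    · rintro ⟨hxA, hxU⟩
      exact ⟨hxU, fun p _ hp h => h hxA hp⟩
    · rintro ⟨hxU, h⟩
      refine ⟨?_, hxU⟩
      by_contra hxA
      rcases hcases x hxU with h' | ⟨p, hp, hxp⟩
      · exact hxA (h'.2 hgen)
      · exact h p hp hxp fun h => absurd h hxA
  · convert inBoolAlg_inter hU (inBoolAlg_iUnion (degenerate D T as) _ hdeg) using 1
    ext x
    simp only [Set.mem_inter_iff, Set.mem_ofPred_eq]
    constructor
    · rintro ⟨hxA, hxU⟩
      rcases hcases x hxU with h' | ⟨p, hp, hxp⟩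
      · exact absurd (h'.1 hxA) hgen
      · exact ⟨hxU, p, hp, hxA, hxp⟩
    · rintro ⟨hxU, p, -, hxA, -⟩
      exact ⟨hxA, hxU⟩

lemma inBoolAlg_of_ordered {d : ℕ} (hd : 2 ≤ d) {δ : ℕ} (hδ : 1 ≤ δ)
    {A : Set (Fin m → ℤ)} (hA : Ordered ((d : ℤ) ^ δ) A) (hst : StableIn A) :
    InBoolAlg (generators d m) A := by
  obtain ⟨F, hF⟩ := hA.exists_cover
  convert inBoolAlg_iUnion F (fun p => A ∩ shift p.1 (free ((d : ℤ) ^ δ) p.2))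
    fun p _ => inBoolAlg_inter_shift_free hd hδ hA hst _ _ using 1
  ext x
  constructor
  · intro hx
    obtain ⟨p, hp, h⟩ := hF hx
    exact ⟨p, hp, hx, h⟩
  · rintro ⟨p, -, h, -⟩
    exact h

lemma exists_lt_two_pow (C p a b : ℕ) : ∃ k : ℕ, C * ((a + k * b) ^ p + 1) < 2 ^ k := by
  have h := (tendsto_pow_const_div_const_pow_of_one_lt p (r := (2 : ℝ)) (by norm_num)).eventually
    (gt_mem_nhds (show (0 : ℝ) < 1 / (C * ((a + b) ^ p + 1) + 1 : ℕ) by positivity))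
  obtain ⟨k, hk, hk1⟩ := (h.and (Filter.eventually_ge_atTop 1)).exists
  refine ⟨k, ?_⟩
  rw [div_lt_div_iff₀ (by positivity) (by positivity), one_mul] at hk
  have hk' : k ^ p * (C * ((a + b) ^ p + 1) + 1) < 2 ^ k := by exact_mod_cast hk
  refine lt_of_le_of_lt ?_ hk'
  have h1 : a + k * b ≤ k * (a + b) := by nlinarith
  have h2 : (a + k * b) ^ p ≤ k ^ p * (a + b) ^ p := by
    rw [← mul_pow]; exact Nat.pow_le_pow_left h1 p
  have h3 : 1 ≤ k ^ p := Nat.one_le_pow _ _ hk1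
  calc C * ((a + k * b) ^ p + 1) ≤ C * (k ^ p * (a + b) ^ p + k ^ p) := by gcongr
    _ ≤ k ^ p * (C * ((a + b) ^ p + 1) + 1) := by nlinarith

section Automata

variable {α Q : Type} (M : DFA α Q)

lemma evalFrom_flatten {q : Q} {ws : List (List α)} (h : ∀ w ∈ ws, M.evalFrom q w = q) :
    M.evalFrom q ws.flatten = q := by
  induction ws with
  | nil => rfl
  | cons w ws ih =>
    rw [List.flatten_cons, DFA.evalFrom_of_append, h w (by simp), ih fun w hw => h w (by simp [hw])]

lemma flatten_injective {w₁ w₂ : List α} (hlen : w₁.length = w₂.length) (hne : w₁ ≠ w₂) :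
    ∀ {s t : List Bool}, s.length = t.length →
      (s.map fun b => cond b w₁ w₂).flatten = (t.map fun b => cond b w₁ w₂).flatten → s = t
  | [], [], _, _ => rfl
  | b :: s, c :: t, hl, h => by
    rw [List.map_cons, List.map_cons, List.flatten_cons, List.flatten_cons] at h
    obtain ⟨h₁, h₂⟩ := List.append_inj h (by cases b <;> cases c <;> simp [hlen])
    rw [flatten_injective hlen hne (by simpa using hl) h₂]
    cases b <;> cases c <;> simp_all

/-- In an automaton recognizing a sparse language, a useful state has at most one loop of each
length. -/
lemma loop_unique {L : Set (List α)} (hL : ∀ w, w ∈ L ↔ M.eval w ∈ M.accept)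
    (hsp : ∃ C p : ℕ, ∀ k : ℕ,
      {σ ∈ L | σ.length ≤ k}.Finite ∧ {σ ∈ L | σ.length ≤ k}.ncard ≤ C * (k ^ p + 1))
    {q : Q} {u z w₁ w₂ : List α} (hu : M.eval u = q) (hz : M.evalFrom q z ∈ M.accept)
    (h₁ : M.evalFrom q w₁ = q) (h₂ : M.evalFrom q w₂ = q) (hlen : w₁.length = w₂.length) :
    w₁ = w₂ := by
  by_contra hne
  obtain ⟨C, p, h⟩ := hsp
  obtain ⟨k, hk⟩ := exists_lt_two_pow C p (u.length + z.length) w₁.length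
  obtain ⟨hfin, hcard⟩ := h (u.length + z.length + k * w₁.length)
  let f : (Fin k → Bool) → List α := fun s =>
    u ++ (((List.ofFn s).map fun b => cond b w₁ w₂).flatten ++ z)
  have hf : Function.Injective f := by
    intro s t hst
    have := List.append_cancel_right (List.append_cancel_left hst)
    exact List.ofFn_injective (flatten_injective hlen hne (by simp) this)
  have hsub : Set.range f ⊆ {σ ∈ L | σ.length ≤ u.length + z.length + k * w₁.length} := by
    rintro _ ⟨s, rfl⟩
    constructor
    · rw [hL, DFA.eval, DFA.evalFrom_of_append, DFA.evalFrom_of_append]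
      change M.evalFrom (M.evalFrom (M.eval u) _) z ∈ _
      rw [hu, evalFrom_flatten]
      · exact hz
      · intro w hw
        obtain ⟨b, -, rfl⟩ := List.mem_map.1 hw
        cases b <;> assumption
    · have : (((List.ofFn s).map fun b => cond b w₁ w₂).flatten).length = k * w₁.length := by
        rw [List.length_flatten, List.map_map]
        have : (List.length ∘ fun b => cond b w₁ w₂) = fun _ => w₁.length := by
          funext b; cases b <;> simp [hlen]
        rw [this]
        simp [Function.comp_def]
      simp only [f, List.length_append, this]
      omega
  have := Set.ncard_le_ncard hsub hfin
  rw [Set.ncard_range_of_injective hf] at this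
  simp at this
  omega

/-- A common length for loops at all states that have a nonempty loop. -/
lemma exists_loop_length [Fintype Q] : ∃ δ : ℕ, 1 ≤ δ ∧ ∀ q w, w ≠ [] → M.evalFrom q w = q →
    ∃ v : List α, v.length = δ ∧ M.evalFrom q v = q := by
  have key : ∀ q, ∃ n : ℕ, 1 ≤ n ∧ ∀ w, w ≠ [] → M.evalFrom q w = q →
      ∃ v : List α, v.length = n ∧ M.evalFrom q v = q := by
    intro q
    by_cases h : ∃ w, w ≠ [] ∧ M.evalFrom q w = q
    · obtain ⟨w, hw, hq⟩ := h
      exact ⟨w.length, List.length_pos_iff.2 hw, fun _ _ _ => ⟨w, rfl, hq⟩⟩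
    · exact ⟨1, le_rfl, fun w hw hq => absurd ⟨w, hw, hq⟩ h⟩
  choose n hn h using key
  refine ⟨∏ q, n q, Finset.one_le_prod' fun q _ => hn q, fun q w hw hq => ?_⟩
  obtain ⟨v, hv, hvq⟩ := h q w hw hq
  obtain ⟨k, hk⟩ := Finset.dvd_prod_of_mem n (Finset.mem_univ q)
  refine ⟨(List.replicate k v).flatten, ?_, evalFrom_flatten M fun w hw => ?_⟩
  · simp [hk, hv, mul_comm]
  · rwa [List.eq_of_mem_replicate hw]

lemma finite_words {F : Set α} (hF : F.Finite) (n : ℕ) :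
    {w : List α | w.length = n ∧ ∀ c ∈ w, c ∈ F}.Finite := by
  induction n with
  | zero => exact (Set.finite_singleton []).subset fun w hw => List.length_eq_zero_iff.1 hw.1
  | succ n ih =>
    refine (Set.Finite.image2 List.cons hF ih).subset ?_
    rintro (_ | ⟨c, w⟩) ⟨hw, h⟩
    · simp at hw
    · exact ⟨c, h c (by simp), w, ⟨by simpa using hw, fun c hc => h c (by simp [hc])⟩, rfl⟩

end Automata

lemma Ordered.biUnion {ι : Type*} {D : ℤ} {s : Set ι} (hs : s.Finite) {f : ι → Set (Fin m → ℤ)}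
    (h : ∀ i ∈ s, Ordered D (f i)) : Ordered D (⋃ i ∈ s, f i) := by
  induction s, hs using Set.Finite.induction_on with
  | empty => simpa using Ordered.empty
  | @insert i s _ _ ih =>
    rw [Set.biUnion_insert]
    exact (h i (by simp)).union (ih fun j hj => h j (by simp [hj]))

/-- The value in base `D` of a word, least significant digit first. -/
def wordValue (D : ℤ) (w : List (Fin m → ℤ)) : Fin m → ℤ := w.foldr (fun c x => c + D • x) 0

lemma wordValue_append (D : ℤ) (u w : List (Fin m → ℤ)) :
    wordValue D (u ++ w) = wordValue D u + D ^ u.length • wordValue D w := by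
  induction u with
  | nil => simp [wordValue]
  | cons c u ih =>
    have : ∀ w, wordValue D (c :: w) = c + D • wordValue D w := fun _ => rfl
    rw [List.cons_append, this, this, ih, List.length_cons, pow_succ']
    module

/-- The values of the words over `F` accepted from the state `q`. -/
def acceptedValues {Q : Type} (M : DFA (Fin m → ℤ) Q) (F : Set (Fin m → ℤ)) (d : ℤ) (q : Q) :
    Set (Fin m → ℤ) :=
  {x | ∃ w, (∀ c ∈ w, c ∈ F) ∧ M.evalFrom q w ∈ M.accept ∧ wordValue d w = x}

lemma affine_acceptedValues_subset {Q : Type} (M : DFA (Fin m → ℤ) Q) {F : Set (Fin m → ℤ)}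
    (d : ℤ) (q : Q) {c : List (Fin m → ℤ)} (hc : ∀ a ∈ c, a ∈ F) :
    affine (d ^ c.length) (wordValue d c) (acceptedValues M F d (M.evalFrom q c)) ⊆
      acceptedValues M F d q := by
  rintro _ ⟨_, ⟨w, hw, hacc, rfl⟩, rfl⟩
  refine ⟨c ++ w, fun a ha => ?_, ?_, wordValue_append d c w⟩
  · exact (List.mem_append.1 ha).elim (hc a) (hw a)
  · rwa [DFA.evalFrom_of_append]

lemma ordered_acceptedValues {Q : Type} [Fintype Q] (M : DFA (Fin m → ℤ) Q)
    {F : Set (Fin m → ℤ)} (hF : F.Finite) (d : ℤ) {L : Set (List (Fin m → ℤ))}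
    (hL : ∀ w, w ∈ L ↔ M.eval w ∈ M.accept)
    (hsp : ∃ C p : ℕ, ∀ k : ℕ,
      {σ ∈ L | σ.length ≤ k}.Finite ∧ {σ ∈ L | σ.length ≤ k}.ncard ≤ C * (k ^ p + 1))
    {δ : ℕ} (hδ : 1 ≤ δ) (hloop : ∀ q w, w ≠ [] → M.evalFrom q w = q →
      ∃ v : List (Fin m → ℤ), v.length = δ ∧ M.evalFrom q v = q)
    (u : List (Fin m → ℤ)) : Ordered (d ^ δ) (acceptedValues M F d (M.eval u)) := by
  classical
  induction hn : {q' | ∃ w : List (Fin m → ℤ), δ ∣ w.length ∧ M.evalFrom (M.eval u) w = q'}.ncard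
    using Nat.strong_induction_on generalizing u with
  | _ n ih =>
  set q := M.eval u with hq
  rcases (acceptedValues M F d q).eq_empty_or_nonempty with hemp | ⟨_, z, -, hz, -⟩
  · rw [hemp]; exact Ordered.empty
  have huniq : ∀ {c v : List (Fin m → ℤ)}, c.length = v.length → M.evalFrom q c = q →
      M.evalFrom q v = q → c = v := fun hlen hc hv => loop_unique M hL hsp hq.symm hz hc hv hlen
  set B : Set (Fin m → ℤ) :=
    (⋃ w ∈ ⋃ n ∈ Set.Iio δ, {w : List (Fin m → ℤ) | w.length = n ∧ ∀ c ∈ w, c ∈ F},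
      if M.evalFrom q w ∈ M.accept then {wordValue d w} else ∅) ∪
    ⋃ c ∈ {w : List (Fin m → ℤ) | w.length = δ ∧ ∀ c ∈ w, c ∈ F},
      if M.evalFrom q c = q then ∅
      else affine (d ^ δ) (wordValue d c) (acceptedValues M F d (M.evalFrom q c)) with hB
  have hBord : Ordered (d ^ δ) B := by
    refine .union (.biUnion ((Set.finite_Iio δ).biUnion fun n _ => finite_words hF n)
      fun w _ => ?_) (.biUnion (finite_words hF δ) fun c hc => ?_)
    · split_ifs
      · exact .singleton _
      · exact .empty
    · split_ifs with hcq
      · exact .empty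
      · refine .affine _ ?_
        have hcu : M.evalFrom q c = M.eval (u ++ c) := by
          rw [DFA.eval, DFA.evalFrom_of_append]; rfl
        rw [hcu]
        refine ih _ ?_ (u ++ c) rfl
        rw [← hn, ← hcu]
        refine Set.ncard_lt_ncard ⟨?_, fun hsub => hcq ?_⟩ (Set.toFinite _)
        · rintro _ ⟨w, hw, rfl⟩
          refine ⟨c ++ w, ?_, DFA.evalFrom_of_append _ _ _ _⟩
          rw [List.length_append, hc.1]
          exact (Nat.dvd_add_self_left).2 hw
        · obtain ⟨w, ⟨k, hw⟩, hcw⟩ := hsub ⟨[], by simp, rfl⟩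
          rw [← DFA.evalFrom_of_append] at hcw
          obtain ⟨v, hv, hvq⟩ := hloop q (c ++ w)
            (fun h => by
              have := congrArg List.length h
              simp only [List.length_append, List.length_nil, hc.1] at this
              omega) hcw
          have hpow : M.evalFrom q (List.replicate (k + 1) v).flatten = q :=
            evalFrom_flatten M fun w hw => by rwa [List.eq_of_mem_replicate hw]
          have := huniq (by simp [hc.1, hw, hv]; ring) hcw hpow
          rw [List.replicate_succ, List.flatten_cons] at this
          rw [(List.append_inj this (by rw [hc.1, hv])).1]
          exact hvq
  have hBsub : B ⊆ acceptedValues M F d q := by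
    rintro x (hx | hx)
    · simp only [Set.mem_iUnion] at hx
      obtain ⟨w, ⟨n, -, hw⟩, hx⟩ := hx
      split_ifs at hx with hacc
      · exact ⟨w, hw.2, hacc, hx.symm⟩
      · exact hx.elim
    · simp only [Set.mem_iUnion] at hx
      obtain ⟨c, hc, hx⟩ := hx
      split_ifs at hx
      · exact hx.elim
      · rw [← hc.1] at hx
        exact affine_acceptedValues_subset M d q hc.2 hx
  have hsplit : ∀ w : List (Fin m → ℤ), (∀ c ∈ w, c ∈ F) → M.evalFrom q w ∈ M.accept →
      wordValue d w ∈ B ∨ ∃ c w', w = c ++ w' ∧ c.length = δ ∧ M.evalFrom q c = q := by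
    intro w hw hacc
    rcases lt_or_ge w.length δ with hlt | hge
    · left; left
      simp only [Set.mem_iUnion]
      exact ⟨w, ⟨_, hlt, rfl, hw⟩, by rw [if_pos hacc]; rfl⟩
    · have hlen : (w.take δ).length = δ := List.length_take_of_le hge
      have hw' := List.take_append_drop δ w
      by_cases hc : M.evalFrom q (w.take δ) = q
      · exact .inr ⟨_, _, hw'.symm, hlen, hc⟩
      · left; right
        simp only [Set.mem_iUnion]
        refine ⟨w.take δ, ⟨hlen, fun c hc => hw c (List.mem_of_mem_take hc)⟩, ?_⟩
        rw [if_neg hc]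
        refine ⟨_, ⟨w.drop δ, fun c hc => hw c (List.mem_of_mem_drop hc), ?_, rfl⟩, ?_⟩
        · rwa [← DFA.evalFrom_of_append, hw']
        · conv_lhs => rw [← hw', wordValue_append, hlen]
  by_cases hv : ∃ v : List (Fin m → ℤ), (v.length = δ ∧ ∀ c ∈ v, c ∈ F) ∧ M.evalFrom q v = q
  · obtain ⟨v, ⟨hvδ, hvF⟩, hvq⟩ := hv
    have : acceptedValues M F d q = star (d ^ δ) (wordValue d v) B := by
      ext x
      constructor
      · rintro ⟨w, hw, hacc, rfl⟩
        induction hk : w.length using Nat.strong_induction_on generalizing w with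
        | _ k ihw =>
        rw [star_eq]
        rcases hsplit w hw hacc with h | ⟨c, w', rfl, hcδ, hcq⟩
        · exact .inl h
        · right
          rw [DFA.evalFrom_of_append, hcq] at hacc
          obtain rfl := huniq (hcδ.trans hvδ.symm) hcq hvq
          refine ⟨_, ihw _ ?_ w' (fun a ha => hw a (by simp [ha])) hacc rfl, ?_⟩
          · rw [← hk, List.length_append]; omega
          · rw [wordValue_append, hcδ]
      · rintro ⟨e, y, hy, rfl⟩
        induction e with
        | zero => simpa [repunit_zero] using hBsub hy
        | succ e ihe =>
          have := affine_acceptedValues_subset M d q hvF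
          rw [hvq, hvδ] at this
          refine this ⟨_, ihe, ?_⟩
          rw [repunit_succ, pow_succ' (d ^ δ)]
          module
    rw [this]
    exact hBord.star _
  · have : acceptedValues M F d q = B := by
      refine Set.Subset.antisymm ?_ hBsub
      rintro _ ⟨w, hw, hacc, rfl⟩
      refine (hsplit w hw hacc).resolve_right ?_
      rintro ⟨c, w', rfl, hcδ, hcq⟩
      exact hv ⟨c, ⟨hcδ, fun a ha => hw a (by simp [ha])⟩, hcq⟩
    rw [this]
    exact hBord

lemma foldr_getD (d : ℤ) (n : ℕ) (l : List ℤ) (hl : l.length ≤ n) :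
    (List.ofFn fun j : Fin n => l.getD j 0).foldr (fun c x => c + d * x) 0 =
      l.foldr (fun c x => c + d * x) 0 := by
  induction n generalizing l with
  | zero => rw [List.length_eq_zero_iff.1 (Nat.le_zero.1 hl)]; rfl
  | succ n ih =>
    cases l with
    | nil =>
      have := ih [] (by simp)
      simp only [List.getD_nil, List.foldr_nil] at this ⊢
      rw [List.ofFn_succ, List.foldr_cons, this]
      simp
    | cons c l =>
      have := ih l (by simpa using hl)
      rw [List.ofFn_succ, List.foldr_cons, List.foldr_cons, ← this]
      simp

lemma canonRep_eq (d : ℕ) (a : ℤ) :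
    canonRep d a = if 0 ≤ a then (Nat.digits d a.toNat).map (fun k : ℕ => (k : ℤ))
      else (Nat.digits d (-a).toNat).map (fun k : ℕ => -(k : ℤ)) := by
  have h : ∀ l : List ℕ, (l >>= fun k => pure (k : ℤ)) = l.map fun k : ℕ => (k : ℤ) := fun l => by
    rw [bind_pure_comp]; rfl
  rw [canonRep, h, h, List.map_map, List.map_map]
  rfl

lemma foldr_canonRep (d : ℕ) (a : ℤ) :
    (canonRep d a).foldr (fun c x => c + (d : ℤ) * x) 0 = a := by
  have key : ∀ l : List ℕ, (l.foldr (fun (c : ℕ) (x : ℤ) => (c : ℤ) + d * x) 0) =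
      (Nat.ofDigits d l : ℕ) := by
    intro l
    induction l with
    | nil => rfl
    | cons c l ih => rw [List.foldr_cons, ih, Nat.ofDigits_cons]; push_cast; rfl
  have key' : ∀ l : List ℕ, (l.foldr (fun (c : ℕ) (x : ℤ) => -(c : ℤ) + d * x) 0) =
      -(Nat.ofDigits d l : ℕ) := by
    intro l
    induction l with
    | nil => rfl
    | cons c l ih => rw [List.foldr_cons, ih, Nat.ofDigits_cons]; push_cast; ring
  rw [canonRep_eq]
  split_ifs with h
  · rw [List.foldr_map, key, Nat.ofDigits_digits, Int.toNat_of_nonneg h]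
  · rw [List.foldr_map, key', Nat.ofDigits_digits, Int.toNat_of_nonneg (by omega), neg_neg]

lemma wordValue_canonRepVec (d : ℕ) (a : Fin m → ℤ) : wordValue d (canonRepVec d a) = a := by
  have key : ∀ (w : List (Fin m → ℤ)) (i : Fin m),
      wordValue d w i = (w.map fun c => c i).foldr (fun c x => c + (d : ℤ) * x) 0 := by
    intro w i
    induction w with
    | nil => rfl
    | cons c w ih => rw [List.map_cons, List.foldr_cons, ← ih]; rfl
  ext i
  rw [key, canonRepVec, List.map_ofFn]
  have := foldr_getD d (Finset.univ.sup fun i => (canonRep d (a i)).length) (canonRep d (a i))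
    (Finset.le_sup (f := fun i => (canonRep d (a i)).length) (Finset.mem_univ i))
  rw [foldr_canonRep] at this
  exact this

lemma mem_Icc_of_mem_canonRepVec {d : ℕ} (hd : 2 ≤ d) {a c : Fin m → ℤ}
    (hc : c ∈ canonRepVec d a) :
    c ∈ Set.Icc (fun _ => -(d : ℤ) : Fin m → ℤ) (fun _ => (d : ℤ)) := by
  have key : ∀ i, ∀ k ∈ canonRep d (a i), -(d : ℤ) ≤ k ∧ k ≤ d := by
    intro i k hk
    rw [canonRep_eq] at hk
    split_ifs at hk <;> obtain ⟨k, hk', rfl⟩ := List.mem_map.1 hk <;>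
      have := Nat.digits_lt_base hd hk' <;> constructor <;> omega
  obtain ⟨j, rfl⟩ := (List.mem_ofFn' _ _).1 hc
  have : ∀ i, -(d : ℤ) ≤ (canonRep d (a i)).getD j 0 ∧ (canonRep d (a i)).getD j 0 ≤ d := by
    intro i
    rcases lt_or_ge (j : ℕ) (canonRep d (a i)).length with h | h
    · rw [List.getD_eq_getElem _ _ h]
      exact key i _ (List.getElem_mem h)
    · rw [List.getD_eq_default _ _ h]
      omega
  exact ⟨fun i => (this i).1, fun i => (this i).2⟩

lemma exists_ordered_of_sparseVec {d : ℕ} (hd : 2 ≤ d) {A : Set (Fin m → ℤ)}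
    (h : SparseVec d A) : ∃ δ : ℕ, 1 ≤ δ ∧ Ordered ((d : ℤ) ^ δ) A := by
  obtain ⟨⟨Q, _, M, hM⟩, hsp⟩ := h
  have hL : ∀ w, w ∈ canonRepVec d '' A ↔ M.eval w ∈ M.accept := fun w => by
    rw [← hM]; exact Iff.rfl
  obtain ⟨δ, hδ, hloop⟩ := exists_loop_length M
  refine ⟨δ, hδ, ?_⟩
  convert ordered_acceptedValues M (Set.finite_Icc (fun _ => -(d : ℤ)) (fun _ => (d : ℤ))) d hL hsp
    hδ hloop [] using 1
  ext x
  constructor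
  · intro hx
    exact ⟨canonRepVec d x, fun c hc => mem_Icc_of_mem_canonRepVec hd hc,
      (hL _).1 ⟨x, hx, rfl⟩, wordValue_canonRepVec d x⟩
  · rintro ⟨w, -, hw, rfl⟩
    obtain ⟨y, hy, rfl⟩ := (hL w).2 hw
    rwa [wordValue_canonRepVec]

end DSparse

theorem stmt6 (d : ℕ) (hd : 2 ≤ d) (m : ℕ) (hm : 1 ≤ m)
    (A : Set (Fin m → ℤ)) (hsp : SparseVec d A) (hst : StableIn A) :
    InBoolAlg
      {S : Set (Fin m → ℤ) | ∃ (k : ℕ) (β : Fin m → ℤ) (a : Fin k → (Fin m → ℤ)) (δ : Fin k → ℕ),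
        (∀ i, 1 ≤ δ i) ∧
        S = {x | ∃ c : Fin k → (Fin m → ℤ),
          (∀ i, c i ∈ CsetVec d (a i) (δ i)) ∧ x = β + ∑ i : Fin k, c i}}
      A := by
  obtain ⟨δ, hδ, hA⟩ := DSparse.exists_ordered_of_sparseVec hd hsp
  exact DSparse.inBoolAlg_of_ordered hd hδ hA hst
end

section
/- Fix an integer d ≥ 2. Suppose A ⊆ ℤ is d-automatic and not d-sparse. If A is stable in (ℤ,+), then A is generic, i.e., finitely many additive translates of A cover ℤ. -/
/-- Evaluation of a word over ℤ base `d`, least significant digit first. -/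
def evalZ (d : ℤ) : List ℤ → ℤ
  | [] => 0
  | k :: σ => k + d * evalZ d σ

/-- `A ⊆ ℤ` is `d`-automatic: the language of all base-`d` representations of elements of `A`
over the alphabet `Σ± = {−(d−1),…,d−1}` is regular. -/
def AutomaticZ (d : ℕ) (A : Set ℤ) : Prop :=
  RegularLang {σ : List ℤ | (∀ k ∈ σ, k.natAbs ≤ d - 1) ∧ evalZ d σ ∈ A}

/-- A set `A ⊆ ℤ` is `d`-sparse if its language of canonical representations is sparse. -/
def SparseZ (d : ℕ) (A : Set ℤ) : Prop := SparseLang (canonRep d '' A)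

/-- `A ⊆ ℤ` is generic if finitely many additive translates of `A` cover ℤ. -/
def GenericZ (A : Set ℤ) : Prop := ∃ T : Finset ℤ, ∀ x : ℤ, ∃ t ∈ T, x - t ∈ A

namespace DFA

variable {α Q : Type}

/-- Some useful state carries two distinct loops of the same length over the letters `Γ`. -/
def HasBranchingLoop (M : DFA α Q) (Γ : Finset α) : Prop :=
  ∃ q u x y w, M.eval u = q ∧ M.evalFrom q x = q ∧ M.evalFrom q y = q ∧
    M.evalFrom q w ∈ M.accept ∧ x.length = y.length ∧ x ≠ y ∧
    (∀ a ∈ x, a ∈ Γ) ∧ (∀ a ∈ y, a ∈ Γ)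

theorem exists_longest_loop (M : DFA α Q) (q : Q) (w : List α) :
    ∃ x y, w = x ++ y ∧ M.evalFrom q x = q ∧
      ∀ v, v <+: y → v ≠ [] → M.evalFrom q v ≠ q := by
  induction h : w.length using Nat.strong_induction_on generalizing w with
  | _ n ih =>
    by_cases hv : ∃ v, v <+: w ∧ v ≠ [] ∧ M.evalFrom q v = q
    · obtain ⟨v, ⟨t, rfl⟩, hne, hq⟩ := hv
      have hpos := List.length_pos_iff.mpr hne
      obtain ⟨x, y, rfl, hx, hy⟩ := ih t.length (by simp at h; omega) t rfl
      exact ⟨v ++ x, y, by simp, by rw [evalFrom_of_append, hq, hx], hy⟩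
    · push Not at hv
      exact ⟨[], w, rfl, rfl, fun v h1 h2 => hv v h1 h2⟩

theorem exists_finset_card_le_of_not_hasBranchingLoop [DecidableEq α] [DecidableEq Q]
    (M : DFA α Q) (Γ : Finset α) (hM : ¬ M.HasBranchingLoop Γ) (k n : ℕ) (S : Finset Q)
    (hS : S.card ≤ n) (u : List α) :
    ∃ F : Finset (List α), F.card ≤ ((Γ.card + 1) * (k + 1)) ^ n ∧
      ∀ w, w.length ≤ k → (∀ a ∈ w, a ∈ Γ) → M.evalFrom (M.eval u) w ∈ M.accept →
        (∀ v, v <+: w → M.evalFrom (M.eval u) v ∈ S) → w ∈ F := by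
  induction n generalizing S u with
  | zero =>
    refine ⟨∅, by simp, fun w _ _ _ h => ?_⟩
    have := h [] List.nil_prefix
    simp_all
  | succ n ih =>
    set q := M.eval u with hq
    by_cases hqS : q ∈ S
    swap
    · exact ⟨∅, by simp, fun w _ _ _ h => absurd (h [] List.nil_prefix) hqS⟩
    have hcard : (S.erase q).card ≤ n := by
      rw [Finset.card_erase_of_mem hqS]; omega
    choose F hFc hF using fun a : α => ih (S.erase q) hcard (u ++ [a])
    have hloop : ∀ j : ℕ, ∃ x : List α, ∀ y : List α, y.length = j → (∀ a ∈ y, a ∈ Γ) →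
        M.evalFrom q y = q → (∃ w, M.evalFrom q w ∈ M.accept) → y = x := by
      intro j
      by_cases h : ∃ x : List α, x.length = j ∧ (∀ a ∈ x, a ∈ Γ) ∧ M.evalFrom q x = q
      · obtain ⟨x, hx, hxΓ, hxq⟩ := h
        refine ⟨x, fun y hy hyΓ hyq ⟨w, hw⟩ => ?_⟩
        by_contra hne
        exact hM ⟨q, u, y, x, w, rfl, hyq, hxq, hw, by omega, hne, hyΓ, hxΓ⟩
      · exact ⟨[], fun y h1 h2 h3 _ => absurd ⟨y, h1, h2, h3⟩ h⟩
    choose x hx using hloop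
    refine ⟨(Finset.range (k + 1)).biUnion fun j =>
      {x j} ∪ Γ.biUnion fun a => (F a).image fun y => x j ++ a :: y, ?_, ?_⟩
    · have h1 : ∀ j ∈ Finset.range (k + 1),
          ({x j} ∪ Γ.biUnion fun a => (F a).image fun y => x j ++ a :: y).card ≤
            1 + Γ.card * ((Γ.card + 1) * (k + 1)) ^ n := by
        intro j _
        refine (Finset.card_union_le _ _).trans ?_
        gcongr
        · simp
        · exact Finset.card_biUnion_le_card_mul _ _ _ fun a _ =>
            Finset.card_image_le.trans (hFc a)
      refine (Finset.card_biUnion_le_card_mul _ _ _ h1).trans ?_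
      rw [Finset.card_range, pow_succ]
      have h2 : 1 ≤ ((Γ.card + 1) * (k + 1)) ^ n := Nat.one_le_pow _ _ (by positivity)
      nlinarith [Nat.zero_le k, Nat.zero_le Γ.card]
    · intro w hwk hwΓ hwa hwS
      obtain ⟨z, y, rfl, hz, hy⟩ := M.exists_longest_loop q w
      simp only [List.mem_append, List.length_append] at hwk hwΓ
      have hzx : z = x z.length := hx _ z rfl (fun a ha => hwΓ a (.inl ha)) hz ⟨_, hwa⟩
      rw [Finset.mem_biUnion]
      refine ⟨z.length, Finset.mem_range.mpr (by omega), ?_⟩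
      rw [← hzx]
      rcases y with _ | ⟨a, y⟩
      · simp
      · refine Finset.mem_union_right _ (Finset.mem_biUnion.mpr ⟨a, hwΓ a (.inr (by simp)), ?_⟩)
        refine Finset.mem_image_of_mem _ (hF a y ?_ ?_ ?_ ?_)
        · simp at hwk; omega
        · exact fun b hb => hwΓ b (.inr (by simp [hb]))
        · rw [evalFrom_of_append, hz] at hwa
          simpa [hq, eval, evalFrom_of_append] using hwa
        · intro v hv
          have h3 : M.evalFrom (M.eval (u ++ [a])) v = M.evalFrom q (a :: v) := by
            simp [hq, eval]
          rw [h3, Finset.mem_erase]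
          have hpre : a :: v <+: a :: y := by simpa using hv
          refine ⟨hy _ hpre (by simp), ?_⟩
          have := hwS (z ++ a :: v) ((List.prefix_append_right_inj z).mpr hpre)
          rwa [evalFrom_of_append, hz] at this

theorem exists_finset_card_le_of_not_hasBranchingLoop_of_fintype [DecidableEq α] [Fintype Q]
    (M : DFA α Q) (Γ : Finset α) (hM : ¬ M.HasBranchingLoop Γ) (k : ℕ) :
    ∃ F : Finset (List α), F.card ≤ ((Γ.card + 1) * (k + 1)) ^ Fintype.card Q ∧
      ∀ w ∈ M.accepts, w.length ≤ k → (∀ a ∈ w, a ∈ Γ) → w ∈ F := by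
  classical
  obtain ⟨F, hF, h⟩ :=
    M.exists_finset_card_le_of_not_hasBranchingLoop Γ hM k _ Finset.univ le_rfl []
  exact ⟨F, hF, fun w hw hk hΓ => h w hk hΓ hw fun _ _ => Finset.mem_univ _⟩

end DFA

theorem not_stableRel_of_forall_hasLadder {X Y : Type*} {R : X → Y → Prop} {a : ℕ → X} {b : ℕ → Y}
    (h : ∀ i j, R (a i) (b j) ↔ i ≤ j) : ¬ StableRel R :=
  fun ⟨_, hN⟩ => hN ⟨fun i => a i, fun j => b j, fun i j => h i j⟩

/-- A finite union of translates `S + h`, `h < g`, of a stable set admits no infinite half graph. -/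
theorem not_stableIn_of_translates {S : Set ℤ} {g : ℕ} {a b : ℕ → ℤ}
    (hin : ∀ i j, i ≤ j → ∃ h < g, a i + b j - (h : ℕ) ∈ S)
    (hout : ∀ i j, j < i → ∀ h < g, a i + b j - (h : ℕ) ∉ S) : ¬ StableIn S := by
  let U := Filter.hyperfilter ℕ
  have hge : ∀ n, ∀ᶠ j in (U : Filter ℕ), n ≤ j := fun n =>
    Nat.hyperfilter_le_atTop (Filter.eventually_ge_atTop n)
  have h1 : ∀ i, ∃ h < g, ∀ᶠ j in (U : Filter ℕ), a i + b j - (h : ℕ) ∈ S := by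
    intro i
    have h2 : (⋃ h ∈ Set.Iio g, {j | a i + b j - (h : ℕ) ∈ S}) ∈ U := by
      refine Filter.mem_of_superset (hge i) fun j hj => ?_
      simpa using hin i j hj
    exact (Ultrafilter.finite_biUnion_mem_iff (Set.finite_Iio g)).mp h2
  obtain ⟨h, hg, hI⟩ : ∃ h < g, ∀ᶠ i in (U : Filter ℕ),
      ∀ᶠ j in (U : Filter ℕ), a i + b j - (h : ℕ) ∈ S := by
    have h2 : (⋃ h ∈ Set.Iio g, {i | ∀ᶠ j in (U : Filter ℕ), a i + b j - (h : ℕ) ∈ S}) ∈ U := by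
      refine Filter.mem_of_superset (hge 0) fun i _ => ?_
      simpa using h1 i
    exact (Ultrafilter.finite_biUnion_mem_iff (Set.finite_Iio g)).mp h2
  obtain ⟨f, hf, hr⟩ := exists_seq_of_forall_finset_exists
    (fun p : ℕ × ℕ => (∀ᶠ j in (U : Filter ℕ), a p.1 + b j - (h : ℕ) ∈ S) ∧
      a p.1 + b p.2 - (h : ℕ) ∈ S)
    (fun p p' => a p.1 + b p'.2 - (h : ℕ) ∈ S ∧ p.2 < p'.1) (by
      intro s hs
      obtain ⟨i, hi, hi'⟩ := (hI.and ((Filter.eventually_all_finset s).mpr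
        fun p _ => hge (p.2 + 1))).exists
      obtain ⟨j, hj, hj'⟩ := (hi.and ((Filter.eventually_all_finset s).mpr
        fun p hp => (hs p hp).1)).exists
      exact ⟨(i, j), ⟨hi, hj⟩, fun p hp => ⟨hj' p hp, hi' p hp⟩⟩)
  refine not_stableRel_of_forall_hasLadder (a := fun i => a (f i).1 - h) (b := fun j => b (f j).2)
    fun i j => ?_
  have e : a (f i).1 - h + b (f j).2 = a (f i).1 + b (f j).2 - h := by ring
  simp only [e]
  constructor
  · intro hS
    by_contra hij
    exact hout _ _ (hr j i (not_le.mp hij)).2 h hg hS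
  · intro hij
    rcases hij.eq_or_lt with rfl | hlt
    · exact (hf i).2
    · exact (hr i j hlt).1

/-- A stable set that is dense up to gaps of size `g` on arbitrarily long intervals is generic. -/
theorem GenericZ.of_stableIn_of_thick {S : Set ℤ} (hS : StableIn S) (g : ℕ)
    (hthick : ∀ L : ℕ, ∃ x : ℤ, ∀ y, x ≤ y → y < x + L → ∃ h < g, y - (h : ℕ) ∈ S) :
    GenericZ S := by
  by_contra hgen
  have hgen' : ∀ F : Finset ℤ, ∃ x : ℤ, ∀ t ∈ F, x - t ∉ S := by
    intro F
    by_contra! h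
    exact hgen ⟨F, h⟩
  have hthick' : ∀ F : Finset ℤ, ∃ b : ℤ, ∀ a ∈ F, ∃ h < g, a + b - (h : ℕ) ∈ S := by
    intro F
    obtain ⟨x, hx⟩ := hthick (2 * F.sup Int.natAbs + 1)
    refine ⟨x + F.sup Int.natAbs, fun a ha => hx _ ?_ ?_⟩ <;>
    · have := Finset.le_sup (f := Int.natAbs) ha
      push_cast
      omega
  obtain ⟨f, hf, hr⟩ := exists_seq_of_forall_finset_exists
    (fun p : ℤ × ℤ => ∃ h < g, p.1 + p.2 - (h : ℕ) ∈ S)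
    (fun p p' => (∃ h < g, p.1 + p'.2 - (h : ℕ) ∈ S) ∧ ∀ h < g, p'.1 + p.2 - (h : ℕ) ∉ S) (by
      intro s _
      obtain ⟨a, ha⟩ := hgen' ((s ×ˢ Finset.range g).image fun q => (q.2 : ℤ) - q.1.2)
      obtain ⟨b, hb⟩ := hthick' (insert a (s.image Prod.fst))
      refine ⟨(a, b), hb a (Finset.mem_insert_self _ _), fun p hp => ⟨hb _ ?_, fun h hg => ?_⟩⟩
      · exact Finset.mem_insert_of_mem (Finset.mem_image_of_mem _ hp)
      · have := ha (h - p.2) (Finset.mem_image.mpr ⟨(p, h), by simp [hp, hg], rfl⟩)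
        rwa [show a + p.2 - (h : ℤ) = a - (h - p.2) by ring])
  refine not_stableIn_of_translates (a := fun i => (f i).1) (b := fun j => (f j).2) (g := g)
    (fun i j hij => ?_) (fun i j hij => ?_) hS
  · rcases hij.eq_or_lt with rfl | hlt
    · exact hf i
    · exact (hr i j hlt).1
  · exact (hr j i hij).2

/-- If every gap length occurs in `S` inside each sufficiently long interval, then finitely many
translates of `S` cannot cover arbitrarily long intervals. -/
theorem exists_interval_avoiding_translates {S : Set ℤ}
    (hS : ∀ g : ℕ, ∃ L : ℕ, ∀ x : ℤ, ∃ y, x ≤ y ∧ y + g ≤ x + L ∧ ∀ h < g, y + (h : ℕ) ∉ S)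
    (n : ℕ) : ∃ L : ℕ, ∀ T : Finset ℤ, T.card ≤ n → ∀ x : ℤ, ∃ y, x ≤ y ∧ y < x + L ∧
      ∀ t ∈ T, y - t ∉ S := by
  induction n with
  | zero => exact ⟨1, fun T hT x => ⟨x, le_rfl, by simp, by simp_all⟩⟩
  | succ n ih =>
    obtain ⟨L, hL⟩ := ih
    obtain ⟨L', hL'⟩ := hS L
    refine ⟨L', fun T hT x => ?_⟩
    rcases T.eq_empty_or_nonempty with rfl | ⟨t, ht⟩
    · obtain ⟨y, h1, h2, -⟩ := hL ∅ (by simp) x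
      obtain ⟨z, h3, h4, -⟩ := hL' x
      exact ⟨x, le_rfl, by omega, by simp⟩
    · obtain ⟨z, h1, h2, h3⟩ := hL' (x - t)
      obtain ⟨y, h4, h5, h6⟩ := hL (T.erase t)
        (by rw [Finset.card_erase_of_mem ht]; omega) (z + t)
      refine ⟨y, by omega, by omega, fun s hs => ?_⟩
      by_cases hst : s = t
      · subst hst
        have := h3 (y - s - z).toNat (by omega)
        rwa [Int.toNat_of_nonneg (by omega), add_sub_cancel] at this
      · exact h6 s (Finset.mem_erase.mpr ⟨hst, hs⟩)

/-- A stable set with `n` translates covering arbitrarily long intervals (`n` fixed) is generic. -/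
theorem GenericZ.of_stableIn_of_forall_cover {S : Set ℤ} (hS : StableIn S) (n : ℕ)
    (h : ∀ L : ℕ, ∃ T : Finset ℤ, T.card ≤ n ∧
      ∃ x : ℤ, ∀ y, x ≤ y → y < x + L → ∃ t ∈ T, y - t ∈ S) :
    GenericZ S := by
  by_contra hgen
  have hgap : ∀ g : ℕ, ∃ L : ℕ, ∀ x : ℤ, ∃ y, x ≤ y ∧ y + g ≤ x + L ∧
      ∀ h < g, y + (h : ℕ) ∉ S := by
    intro g
    by_contra! hg
    refine hgen (GenericZ.of_stableIn_of_thick hS g fun L => ?_)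
    obtain ⟨x, hx⟩ := hg (L + g)
    refine ⟨x + g, fun y h1 h2 => ?_⟩
    obtain ⟨k, hk, hkS⟩ := hx (y - g + 1) (by omega) (by push_cast; omega)
    refine ⟨g - 1 - k, by omega, ?_⟩
    rwa [show y - ((g - 1 - k : ℕ) : ℤ) = y - g + 1 + k by omega]
  obtain ⟨L, hL⟩ := exists_interval_avoiding_translates hgap n
  obtain ⟨T, hT, x, hx⟩ := h L
  obtain ⟨y, h1, h2, h3⟩ := hL T hT x
  obtain ⟨t, ht, hy⟩ := hx y h1 h2
  exact h3 t ht hy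

/-- A block of `len` base-`d` digits with value `val`; multiplication is concatenation. -/
@[ext] structure DigitBlock (d : ℕ) where
  len : ℕ
  val : ℤ

namespace DigitBlock

variable {d : ℕ}

instance : Monoid (DigitBlock d) where
  mul p q := ⟨p.len + q.len, p.val + (d : ℤ) ^ p.len * q.val⟩
  one := ⟨0, 0⟩
  mul_assoc p q r := DigitBlock.ext (Nat.add_assoc _ _ _) (by
    change p.val + (d : ℤ) ^ p.len * q.val + (d : ℤ) ^ (p.len + q.len) * r.val =
      p.val + (d : ℤ) ^ p.len * (q.val + (d : ℤ) ^ q.len * r.val)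
    ring)
  one_mul p := DigitBlock.ext (Nat.zero_add _) (by
    change (0 : ℤ) + (d : ℤ) ^ 0 * p.val = p.val
    ring)
  mul_one p := DigitBlock.ext (Nat.add_zero _) (by
    change p.val + (d : ℤ) ^ p.len * 0 = p.val
    ring)

@[simp] theorem len_mul (p q : DigitBlock d) : (p * q).len = p.len + q.len := rfl
@[simp] theorem val_mul (p q : DigitBlock d) :
    (p * q).val = p.val + (d : ℤ) ^ p.len * q.val := rfl
@[simp] theorem len_one : (1 : DigitBlock d).len = 0 := rfl
@[simp] theorem val_one : (1 : DigitBlock d).val = 0 := rfl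

@[simp] theorem len_pow (p : DigitBlock d) (n : ℕ) : (p ^ n).len = n * p.len := by
  induction n with
  | zero => simp
  | succ n ih => rw [pow_succ, len_mul, ih]; ring

/-- Blocks whose value is that of a word with digits of absolute value at most `M * (d - 1)`. -/
def bounded (d : ℕ) (M : ℤ) : Submonoid (DigitBlock d) where
  carrier := {p | |p.val| ≤ M * ((d : ℤ) ^ p.len - 1)}
  one_mem' := by simp
  mul_mem' := by
    intro p q hp hq
    simp only [Set.mem_ofPred_eq, len_mul, val_mul] at *
    have h1 : (0 : ℤ) ≤ (d : ℤ) ^ p.len := by positivity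
    calc |p.val + (d : ℤ) ^ p.len * q.val| ≤ |p.val| + |(d : ℤ) ^ p.len * q.val| := abs_add_le _ _
      _ = |p.val| + (d : ℤ) ^ p.len * |q.val| := by rw [abs_mul, abs_of_nonneg h1]
      _ ≤ M * ((d : ℤ) ^ p.len - 1) + (d : ℤ) ^ p.len * (M * ((d : ℤ) ^ q.len - 1)) := by gcongr
      _ = _ := by ring

theorem mem_bounded {M : ℤ} {p : DigitBlock d} :
    p ∈ bounded d M ↔ |p.val| ≤ M * ((d : ℤ) ^ p.len - 1) := Iff.rfl

theorem bounded_mono (hd : 0 < d) {M N : ℤ} (h : M ≤ N) : bounded d M ≤ bounded d N := by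
  intro p hp
  have h1 : (1 : ℤ) ≤ (d : ℤ) ^ p.len := one_le_pow₀ (by exact_mod_cast hd)
  rw [mem_bounded] at *
  nlinarith

/-- The integers `n` such that the block `p` followed by (the digits of) `n` represents an element
of `S`. -/
def residual (S : Set ℤ) (p : DigitBlock d) : Set ℤ := {n | p.val + (d : ℤ) ^ p.len * n ∈ S}

@[simp] theorem mem_residual {S : Set ℤ} {p : DigitBlock d} {n : ℤ} :
    n ∈ residual S p ↔ p.val + (d : ℤ) ^ p.len * n ∈ S := Iff.rfl

theorem residual_mul (S : Set ℤ) (p q : DigitBlock d) :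
    residual S (p * q) = residual (residual S p) q := by
  ext n
  simp only [mem_residual, val_mul, len_mul]
  rw [show p.val + (d : ℤ) ^ p.len * q.val + (d : ℤ) ^ (p.len + q.len) * n =
    p.val + (d : ℤ) ^ p.len * (q.val + (d : ℤ) ^ q.len * n) by ring]

theorem val_mul_mem_iff {S : Set ℤ} {p q : DigitBlock d} :
    (p * q).val ∈ S ↔ q.val ∈ residual S p := Iff.rfl

theorem stableIn_residual {S : Set ℤ} (hS : StableIn S) (p : DigitBlock d) :
    StableIn (residual S p) := by
  obtain ⟨N, hN⟩ := hS
  refine ⟨N, fun ⟨a, b, h⟩ => hN ⟨fun i => p.val + (d : ℤ) ^ p.len * a i,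
    fun j => (d : ℤ) ^ p.len * b j, fun i j => ?_⟩⟩
  have key : p.val + (d : ℤ) ^ p.len * a i + (d : ℤ) ^ p.len * b j =
    p.val + (d : ℤ) ^ p.len * (a i + b j) := by ring
  simp only [← h i j, mem_residual, key]

theorem genericZ_of_residual (hd : 0 < d) {S : Set ℤ} {p : DigitBlock d}
    (h : GenericZ (residual S p)) : GenericZ S := by
  obtain ⟨T, hT⟩ := h
  have hpos : (0 : ℤ) < (d : ℤ) ^ p.len := by positivity
  refine ⟨(T ×ˢ Finset.Ico 0 ((d : ℤ) ^ p.len)).image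
    fun q => (d : ℤ) ^ p.len * q.1 + q.2, fun x => ?_⟩
  obtain ⟨t, ht, hx⟩ := hT ((x - p.val) / (d : ℤ) ^ p.len)
  refine ⟨_, Finset.mem_image_of_mem _ (a := (t, (x - p.val) % (d : ℤ) ^ p.len)) ?_, ?_⟩
  · simp [ht, Int.emod_nonneg _ hpos.ne', Int.emod_lt_of_pos _ hpos]
  · rw [mem_residual] at hx
    convert hx using 1
    have := Int.emod_add_mul_ediv (x - p.val) ((d : ℤ) ^ p.len)
    linear_combination -this

/-- Four blocks of equal length with `p + q = r + s`. -/
structure Balanced (p q r s : DigitBlock d) : Prop where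
  len₂ : q.len = p.len
  len₃ : r.len = p.len
  len₄ : s.len = p.len
  val_eq : p.val + q.val = r.val + s.val

namespace Balanced

variable {p q r s p' q' r' s' : DigitBlock d}

theorem mul (h : Balanced p q r s) (h' : Balanced p' q' r' s') :
    Balanced (p * p') (q * q') (r * r') (s * s') := by
  obtain ⟨h1, h2, h3, h4⟩ := h
  obtain ⟨h1', h2', h3', h4'⟩ := h'
  refine ⟨by simp [*], by simp [*], by simp [*], ?_⟩
  simp only [val_mul, h1, h2, h3]
  linear_combination h4 + (d : ℤ) ^ p.len * h4'

theorem refl (p : DigitBlock d) : Balanced p p p p := ⟨rfl, rfl, rfl, rfl⟩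

theorem pow (h : Balanced p q r s) (n : ℕ) : Balanced (p ^ n) (q ^ n) (r ^ n) (s ^ n) := by
  induction n with
  | zero => simpa using refl 1
  | succ n ih => simpa only [pow_succ] using ih.mul h

theorem swap (h : p.len = q.len) : Balanced p q q p := ⟨h.symm, h.symm, rfl, add_comm _ _⟩

theorem same (h : p.len = q.len) : Balanced p q p q := ⟨h.symm, rfl, h.symm, rfl⟩

end Balanced

theorem exists_period {𝒦 : Set (Set ℤ)} (h𝒦 : 𝒦.Finite) {e o : DigitBlock d}
    (he : ∀ T ∈ 𝒦, ∀ n, residual T (e ^ n) ∈ 𝒦) (ho : ∀ T ∈ 𝒦, ∀ n, residual T (o ^ n) ∈ 𝒦) :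
    ∃ K > 0, ∀ T ∈ 𝒦, ∀ n m, K ≤ n + 1 →
      residual T (e ^ (n + K * m)) = residual T (e ^ n) ∧
      residual T (o ^ (n + K * m)) = residual T (o ^ n) := by
  have := h𝒦.to_subtype
  obtain ⟨i, j, hij, hf⟩ : ∃ i j, i < j ∧ ∀ T ∈ 𝒦,
      residual T (e ^ i) = residual T (e ^ j) ∧ residual T (o ^ i) = residual T (o ^ j) := by
    obtain ⟨i, j, hne, hf⟩ := Finite.exists_ne_map_eq_of_infinite
      fun (n : ℕ) (T : 𝒦) => ((⟨_, he T T.2 n⟩, ⟨_, ho T T.2 n⟩) : 𝒦 × 𝒦)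
    have h1 : ∀ T ∈ 𝒦,
        residual T (e ^ i) = residual T (e ^ j) ∧ residual T (o ^ i) = residual T (o ^ j) := by
      intro T hT
      simpa using congrFun hf ⟨T, hT⟩
    rcases lt_or_gt_of_ne hne with h | h
    · exact ⟨i, j, h, h1⟩
    · exact ⟨j, i, h, fun T hT => ⟨(h1 T hT).1.symm, (h1 T hT).2.symm⟩⟩
  have hper : ∀ x : DigitBlock d, (∀ T ∈ 𝒦, residual T (x ^ i) = residual T (x ^ j)) →
      ∀ T ∈ 𝒦, ∀ n m, i ≤ n → residual T (x ^ (n + (j - i) * m)) = residual T (x ^ n) := by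
    intro x hx T hT n m hn
    induction m with
    | zero => simp
    | succ m ih =>
      rw [← ih]
      obtain ⟨k, hk⟩ : ∃ k, n + (j - i) * m = i + k := ⟨_, (Nat.add_sub_of_le (by omega)).symm⟩
      rw [show n + (j - i) * (m + 1) = j + k by rw [Nat.mul_add]; omega, hk,
        pow_add, pow_add, residual_mul, residual_mul, hx T hT]
  refine ⟨(j - i) * (i + 1), Nat.mul_pos (by omega) (by omega), fun T hT n m hn => ?_⟩
  have hin : i ≤ n := by
    have : 1 * (i + 1) ≤ (j - i) * (i + 1) := Nat.mul_le_mul_right _ (by omega)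
    omega
  rw [mul_assoc]
  exact ⟨hper e (fun T hT => (hf T hT).1) T hT n _ hin,
    hper o (fun T hT => (hf T hT).2) T hT n _ hin⟩

/-- If every block `u x σ y v` with `x, y ∈ W` represents an element of the stable set `A`, then
`σ` may be perturbed to `σ + e - o` with `e, o ∈ W`, up to enlarging it by elements of `W`. -/
theorem exists_perturbation {A : Set ℤ} (hst : StableIn A) {M : ℤ}
    (hfin : (residual A '' (bounded d M : Set (DigitBlock d))).Finite)
    {W : Submonoid (DigitBlock d)} (hW : W ≤ bounded d M) {u v e o σ σ' : DigitBlock d}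
    (hu : u ∈ bounded d M) (he : e ∈ W) (ho : o ∈ W) (hσ' : σ' ∈ bounded d M)
    (hbal : Balanced e σ o σ')
    (hA : ∀ x ∈ W, ∀ y ∈ W, (u * x * σ * y * v).val ∈ A) :
    ∃ s ∈ W, ∃ t ∈ W, ∀ x ∈ W, ∀ y ∈ W, (u * x * (s * σ' * t) * y * v).val ∈ A := by
  have hclosed : ∀ p ∈ bounded d M, ∀ T ∈ residual A '' (bounded d M : Set (DigitBlock d)),
      residual T p ∈ residual A '' (bounded d M : Set (DigitBlock d)) := by
    rintro p hp _ ⟨q, hq, rfl⟩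
    exact ⟨q * p, mul_mem hq hp, residual_mul _ _ _⟩
  obtain ⟨K, hK, hper⟩ := exists_period hfin
    (fun T hT n => hclosed _ (pow_mem (hW he) n) T hT)
    (fun T hT n => hclosed _ (pow_mem (hW ho) n) T hT)
  refine ⟨e ^ K, pow_mem he K, e ^ (K - 1) * o ^ K, mul_mem (pow_mem he _) (pow_mem ho _),
    fun x hx y hy => ?_⟩
  by_contra hnot
  obtain ⟨N, hN⟩ := hst
  have hlen : (e ^ K).len = (o ^ K).len := by simp [hbal.len₃]
  have hblock : Balanced (e ^ K) (σ * o ^ (K - 1)) (o ^ K) (σ' * e ^ (K - 1)) := by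
    obtain ⟨k, rfl⟩ : ∃ k, K = k + 1 := ⟨K - 1, by omega⟩
    simpa only [pow_succ', Nat.add_sub_cancel] using
      hbal.mul ((Balanced.swap hbal.len₃.symm).pow k)
  have hsum : ∀ {p q r s : DigitBlock d}, Balanced p q r s →
      (u * x * p * (y * v)).val + ((u * x * q * (y * v)).val - (u * x * r * (y * v)).val) =
        (u * x * s * (y * v)).val := by
    intro p q r s h
    have := (((Balanced.refl (u * x)).mul h).mul (Balanced.refl (y * v))).val_eq
    linarith
  refine hN ⟨fun i => (u * x * ((e ^ K) ^ (i.val + 1) * (o ^ K) ^ (N + 1 - i.val)) * (y * v)).val,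
    fun j => (u * x * ((o ^ K) ^ (j.val + 1) * (σ * o ^ (K - 1)) * (o ^ K) ^ (N - j.val)) *
      (y * v)).val - (u * x * (o ^ K) ^ (N + 2) * (y * v)).val, fun i j => ?_⟩
  obtain ⟨i, hi⟩ := i
  obtain ⟨j, hj⟩ := j
  simp only [Fin.mk_le_mk]
  rcases le_or_gt i j with hij | hij
  · have hb : Balanced ((e ^ K) ^ (i + 1) * (o ^ K) ^ (N + 1 - i))
        ((o ^ K) ^ (j + 1) * (σ * o ^ (K - 1)) * (o ^ K) ^ (N - j)) ((o ^ K) ^ (N + 2))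
        ((e ^ K) ^ (i + 1) * (o ^ K) ^ (j - i) * (σ * o ^ (K - 1)) * (o ^ K) ^ (N - j)) := by
      have := ((((Balanced.swap hlen).pow (i + 1)).mul ((Balanced.refl (o ^ K)).pow (j - i))).mul
        (Balanced.same (hlen.symm.trans hblock.len₂.symm))).mul
          ((Balanced.refl (o ^ K)).pow (N - j))
      convert this using 1
      · rw [mul_assoc, mul_assoc, ← pow_succ', ← pow_add]
        congr 2; omega
      · rw [← pow_add]
        congr 3; omega
      · rw [← pow_add, ← pow_succ, ← pow_add]
        congr 1; omega
    rw [hsum hb]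
    refine iff_of_true ?_ hij
    have := hA (x * ((e ^ K) ^ (i + 1) * (o ^ K) ^ (j - i)))
      (mul_mem hx (mul_mem (pow_mem (pow_mem he _) _) (pow_mem (pow_mem ho _) _)))
      (o ^ (K - 1) * (o ^ K) ^ (N - j) * y)
      (mul_mem (mul_mem (pow_mem ho _) (pow_mem (pow_mem ho _) _)) hy)
    simpa only [mul_assoc] using this
  · have hb : Balanced ((e ^ K) ^ (i + 1) * (o ^ K) ^ (N + 1 - i))
        ((o ^ K) ^ (j + 1) * (σ * o ^ (K - 1)) * (o ^ K) ^ (N - j)) ((o ^ K) ^ (N + 2))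
        ((e ^ K) ^ (j + 1) * (σ' * e ^ (K - 1)) * (e ^ K) ^ (i - j - 1) *
          (o ^ K) ^ (N + 1 - i)) := by
      have := ((((Balanced.swap hlen).pow (j + 1)).mul hblock).mul
        ((Balanced.swap hlen).pow (i - j - 1))).mul ((Balanced.refl (o ^ K)).pow (N + 1 - i))
      convert this using 1
      · rw [← pow_succ, ← pow_add]
        congr 2; omega
      · rw [mul_assoc _ _ ((o ^ K) ^ (N + 1 - i)), ← pow_add]
        congr 2; omega
      · rw [← pow_succ, ← pow_add, ← pow_add]
        congr 1; omega
    rw [hsum hb]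
    refine iff_of_false (fun hmem => hnot ?_) (by omega)
    have hux : u * x ∈ bounded d M := mul_mem hu (hW hx)
    have heM : ∀ n, e ^ n ∈ bounded d M := fun n => hW (pow_mem he n)
    have h1 : residual A (u * x * (e ^ K) ^ (j + 1)) = residual A (u * x * e ^ K) := by
      rw [residual_mul _ (u * x), residual_mul _ (u * x), ← pow_mul, mul_add, mul_one, add_comm]
      exact (hper _ ⟨_, hux, rfl⟩ K j (by omega)).1
    have h2 : residual A (u * x * (e ^ K) ^ (j + 1) * (σ' * e ^ (K - 1)) * (e ^ K) ^ (i - j - 1)) =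
        residual A (u * x * e ^ K * σ' * e ^ (K - 1)) := by
      rw [mul_assoc (u * x * (e ^ K) ^ (j + 1)), residual_mul, h1, ← residual_mul, mul_assoc σ',
        ← pow_mul, ← pow_add, ← mul_assoc, residual_mul,
        (hper _ ⟨_, mul_mem (mul_mem hux (heM K)) hσ', rfl⟩ (K - 1) _ (by omega)).1, ← residual_mul]
    have h3 : residual A (u * x * (e ^ K) ^ (j + 1) * (σ' * e ^ (K - 1)) * (e ^ K) ^ (i - j - 1) *
        (o ^ K) ^ (N + 1 - i)) = residual A (u * x * e ^ K * σ' * e ^ (K - 1) * o ^ K) := by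
      rw [residual_mul, h2, residual_mul _ _ (o ^ K), ← pow_mul,
        show K * (N + 1 - i) = K + K * (N - i) by
          rw [show N + 1 - i = 1 + (N - i) by omega, mul_add, mul_one]]
      exact (hper _ ⟨_, mul_mem (mul_mem (mul_mem hux (heM K)) hσ') (heM _), rfl⟩ K _ (by omega)).2
    have h4 : (u * x * (e ^ K * σ' * (e ^ (K - 1) * o ^ K)) * y * v).val =
        (u * x * e ^ K * σ' * e ^ (K - 1) * o ^ K * (y * v)).val := by simp only [mul_assoc]
    rw [h4, val_mul_mem_iff, ← h3, ← val_mul_mem_iff]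
    simpa only [mul_assoc] using hmem

end DigitBlock

namespace DigitBlock

variable {d : ℕ}

theorem mem_bounded_one_of_nonneg {k : ℕ} {r : ℤ} (h0 : 0 ≤ r) (h1 : r < (d : ℤ) ^ k) :
    (⟨k, r⟩ : DigitBlock d) ∈ bounded d 1 := by
  rw [mem_bounded, abs_of_nonneg h0]
  change r ≤ 1 * ((d : ℤ) ^ k - 1)
  omega

theorem exists_sum_perturbation (hd : 0 < d) {A : Set ℤ} (hst : StableIn A) {M : ℤ}
    (hfin : (residual A '' (bounded d M : Set (DigitBlock d))).Finite)
    {W : Submonoid (DigitBlock d)} (hW : W ≤ bounded d 1) {u v o : DigitBlock d}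
    (hu : u ∈ bounded d 1) (ho : o ∈ W) {e : ℕ → DigitBlock d} (he : ∀ i, e i ∈ W)
    (hlen : ∀ i, (e i).len = o.len)
    (hA : ∀ x ∈ W, (u * x * v).val ∈ A) (m : ℕ) (hm : 2 * (m : ℤ) + 1 ≤ M) :
    ∃ s ∈ W, ∃ t ∈ W, ∀ x ∈ W, ∀ y ∈ W,
      (u * x * (s * ⟨o.len, o.val + ∑ i ∈ Finset.range m, ((e i).val - o.val)⟩ * t) * y * v).val
        ∈ A := by
  have hM : bounded d 1 ≤ bounded d M := bounded_mono hd (by omega)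
  induction m with
  | zero =>
    refine ⟨1, one_mem _, 1, one_mem _, fun x hx y hy => ?_⟩
    have := hA (x * o * y) (mul_mem (mul_mem hx ho) hy)
    simpa [mul_assoc] using this
  | succ m ih =>
    obtain ⟨s, hs, t, ht, h⟩ := ih (by push_cast at hm; omega)
    set f : ℕ → ℤ := fun m => o.val + ∑ i ∈ Finset.range m, ((e i).val - o.val) with hf
    have hfb : |f (m + 1)| ≤ M * ((d : ℤ) ^ o.len - 1) := by
      have h0 : |o.val| ≤ (d : ℤ) ^ o.len - 1 := by simpa using mem_bounded.mp (hW ho)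
      have h1 : ∀ i ∈ Finset.range (m + 1), |(e i).val - o.val| ≤ 2 * ((d : ℤ) ^ o.len - 1) := by
        intro i _
        have h2 : |(e i).val| ≤ (d : ℤ) ^ o.len - 1 := by
          simpa [hlen] using mem_bounded.mp (hW (he i))
        linarith [abs_sub (e i).val o.val]
      have h3 := (Finset.abs_sum_le_sum_abs _ _).trans (Finset.sum_le_sum h1)
      rw [Finset.sum_const, Finset.card_range, nsmul_eq_mul] at h3
      have h4 := abs_add_le o.val (∑ i ∈ Finset.range (m + 1), ((e i).val - o.val))
      have h5 := abs_nonneg o.val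
      rw [hf]
      nlinarith
    have hbal : Balanced (s * e m * t) (s * ⟨o.len, f m⟩ * t) (s * o * t)
        (s * ⟨o.len, f (m + 1)⟩ * t) := by
      have h0 : Balanced (e m) ⟨o.len, f m⟩ o ⟨o.len, f (m + 1)⟩ :=
        ⟨(hlen m).symm, (hlen m).symm, (hlen m).symm, by
          simp only [hf, Finset.sum_range_succ]
          ring⟩
      exact ((Balanced.refl s).mul h0).mul (Balanced.refl t)
    obtain ⟨s', hs', t', ht', h'⟩ := exists_perturbation hst hfin (hW.trans hM) (hM hu)
      (mul_mem (mul_mem hs (he m)) ht) (mul_mem (mul_mem hs ho) ht)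
      (mul_mem (mul_mem (hM (hW hs)) (mem_bounded.mpr hfb)) (hM (hW ht))) hbal h
    refine ⟨s' * s, mul_mem hs' hs, t * t', mul_mem ht ht', fun x hx y hy => ?_⟩
    simpa only [mul_assoc] using h' x hx y hy

theorem exists_sum_eq_mul {V₀ V₁ : DigitBlock d} (hlen : V₁.len = V₀.len) (hd : 0 < d) (n z : ℕ)
    (hz : z < (d ^ V₀.len) ^ n) :
    ∃ e : ℕ → DigitBlock d, (∀ i, e i ∈ Submonoid.closure {V₀, V₁}) ∧
      (∀ i, (e i).len = (V₀ ^ n).len) ∧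
      ∑ i ∈ Finset.range (d ^ V₀.len - 1), ((e i).val - (V₀ ^ n).val) =
        (V₁.val - V₀.val) * z := by
  induction n generalizing z with
  | zero => exact ⟨fun _ => 1, fun _ => one_mem _, by simp, by simp at hz; simp [hz]⟩
  | succ n ih =>
    set D := d ^ V₀.len with hD
    have hDpos : 0 < D := by positivity
    obtain ⟨e, he, hel, hes⟩ := ih (z / D) (by
      rw [Nat.div_lt_iff_lt_mul hDpos, ← pow_succ]; exact hz)
    refine ⟨fun i => (if i < z % D then V₁ else V₀) * e i, fun i => ?_, fun i => ?_, ?_⟩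
    · refine mul_mem (Submonoid.subset_closure ?_) (he i)
      split_ifs <;> simp
    · rw [pow_succ', len_mul, len_mul, hel]
      split_ifs <;> simp [hlen]
    · have h1 : ∀ i ∈ Finset.range (D - 1),
          ((if i < z % D then V₁ else V₀) * e i).val - (V₀ ^ (n + 1)).val =
            (if i < z % D then V₁.val - V₀.val else 0) +
              (D : ℤ) * ((e i).val - (V₀ ^ n).val) := by
        intro i _
        rw [pow_succ', hD]
        split_ifs <;> simp [hlen] <;> ring
      rw [Finset.sum_congr rfl h1, Finset.sum_add_distrib, ← Finset.mul_sum, hes,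
        ← Finset.sum_filter, Finset.sum_const]
      have h2 : (Finset.range (D - 1)).filter (fun i => i < z % D) = Finset.range (z % D) := by
        ext i
        have := Nat.mod_lt z hDpos
        simp only [Finset.mem_filter, Finset.mem_range]
        omega
      rw [h2, Finset.card_range, nsmul_eq_mul]
      have h3 : ((z % D : ℕ) : ℤ) + D * (z / D : ℕ) = z := by exact_mod_cast Nat.mod_add_div z D
      linear_combination (V₁.val - V₀.val) * h3

/-- A stable set that meets every residue class modulo every power of `d`, and whose residuals are
finite in number, is generic. -/
theorem genericZ_of_forall_residual_nonempty {S : Set ℤ} (hst : StableIn S) (hd : 2 ≤ d)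
    (hfin : (residual S '' (bounded d 1 : Set (DigitBlock d))).Finite)
    (hne : ∀ q ∈ bounded d 1, (residual S q).Nonempty) : GenericZ S := by
  choose! f hf using fun (T : Set ℤ) (h : T.Nonempty) => h
  obtain ⟨m, hm⟩ := (hfin.image fun T => (f T).natAbs).bddAbove
  refine GenericZ.of_stableIn_of_forall_cover hst (Finset.Icc (-m : ℤ) m).card fun L =>
    ⟨(Finset.Icc (-m : ℤ) m).image fun t => -((d : ℤ) ^ L * t), Finset.card_image_le, 0,
      fun y h0 h1 => ?_⟩
  have hL : (L : ℤ) < (d : ℤ) ^ L := by exact_mod_cast Nat.lt_pow_self (by omega)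
  have hb : (⟨L, y⟩ : DigitBlock d) ∈ bounded d 1 := mem_bounded_one_of_nonneg h0 (by omega)
  have h2 : (f (residual S ⟨L, y⟩)).natAbs ≤ m :=
    hm ⟨_, ⟨_, hb, rfl⟩, rfl⟩
  have h4 : f (residual S ⟨L, y⟩) ∈ Finset.Icc (-m : ℤ) m :=
    Finset.mem_Icc.mpr ⟨by omega, by omega⟩
  refine ⟨_, Finset.mem_image_of_mem _ h4, ?_⟩
  have h3 := hf _ (hne _ hb)
  rw [mem_residual] at h3
  rwa [sub_neg_eq_add]

theorem residual_residual_subset {A : Set ℤ} {M : ℤ} {p : DigitBlock d} (hp : p ∈ bounded d M) :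
    residual (residual A p) '' (bounded d M : Set (DigitBlock d)) ⊆
      residual A '' (bounded d M : Set (DigitBlock d)) := by
  rintro _ ⟨q, hq, rfl⟩
  exact ⟨p * q, mul_mem hp hq, residual_mul _ _ _⟩

/-- If a stable set with finitely many residuals is not generic, some block never occurs in it. -/
theorem exists_forbidden_block {A : Set ℤ} (hst : StableIn A) (hd : 2 ≤ d)
    (hfin : (residual A '' (bounded d 1 : Set (DigitBlock d))).Finite) (hA : ¬ GenericZ A) :
    ∃ q : DigitBlock d, ∀ p ∈ bounded d 1, residual A (p * q) = ∅ := by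
  have hkill : ∀ p ∈ bounded d 1, ∃ q ∈ bounded d 1, residual A (p * q) = ∅ := by
    intro p hp
    by_contra! h
    refine hA (genericZ_of_residual (by omega) (genericZ_of_forall_residual_nonempty
      (stableIn_residual hst p) hd (hfin.subset (residual_residual_subset hp)) fun q hq => ?_))
    rw [← residual_mul]
    exact h q hq
  have hempty : ∀ q : DigitBlock d, residual ∅ q = ∅ := fun q => by ext; simp
  have hind : ∀ F : Finset (Set ℤ), ∃ q ∈ bounded d 1, ∀ p ∈ bounded d 1, residual A p ∈ F →
      residual A (p * q) = ∅ := by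
    intro F
    induction F using Finset.induction_on with
    | empty => exact ⟨1, one_mem _, by simp⟩
    | insert T F _ ih =>
      obtain ⟨q, hq, h⟩ := ih
      by_cases hT : ∃ p ∈ bounded d 1, residual A p = T
      · obtain ⟨p, hp, rfl⟩ := hT
        obtain ⟨q', hq', h'⟩ := hkill (p * q) (mul_mem hp hq)
        refine ⟨q * q', mul_mem hq hq', fun p' hp' hF => ?_⟩
        rcases Finset.mem_insert.mp hF with hF | hF
        · rw [residual_mul, hF, ← residual_mul, ← mul_assoc, h']
        · rw [← mul_assoc, residual_mul, h p' hp' hF, hempty]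
      · refine ⟨q, hq, fun p hp hF => h p hp ?_⟩
        rcases Finset.mem_insert.mp hF with hF | hF
        · exact absurd ⟨p, hp, hF⟩ hT
        · exact hF
  obtain ⟨q, -, h⟩ := hind hfin.toFinset
  exact ⟨q, fun p hp => h p hp (hfin.mem_toFinset.mpr ⟨p, hp, rfl⟩)⟩

theorem genericZ_of_free_submonoid {A : Set ℤ} (hst : StableIn A) (hd : 2 ≤ d)
    (hfin : ∀ M : ℤ, (residual A '' (bounded d M : Set (DigitBlock d))).Finite)
    {u v V₀ V₁ : DigitBlock d} (hu : u ∈ bounded d 1) (h₀ : V₀ ∈ bounded d 1)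
    (h₁ : V₁ ∈ bounded d 1) (hlen : V₁.len = V₀.len) (hne : V₀.val ≠ V₁.val)
    (hA : ∀ x ∈ Submonoid.closure {V₀, V₁}, (u * x * v).val ∈ A) : GenericZ A := by
  wlog hlt : V₀.val < V₁.val generalizing V₀ V₁
  · exact this h₁ h₀ hlen.symm hne.symm (by rwa [Set.pair_comm]) (by omega)
  by_contra hgen
  obtain ⟨⟨k, r⟩, hq⟩ := exists_forbidden_block hst hd (hfin 1) hgen
  have hW : Submonoid.closure {V₀, V₁} ≤ bounded d 1 := by
    rw [Submonoid.closure_le]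
    rintro x (rfl | rfl) <;> assumption
  have hlpos : 0 < V₀.len := by
    by_contra h
    rw [mem_bounded] at h₀ h₁
    simp only [hlen, show V₀.len = 0 by omega] at h₀ h₁
    simp only [pow_zero, sub_self, mul_zero, abs_nonpos_iff] at h₀ h₁
    omega
  obtain ⟨c, hc⟩ : ∃ c : ℕ, (c : ℤ) = V₁.val - V₀.val := ⟨_, Int.toNat_of_nonneg (by omega)⟩
  have hcpos : 0 < c := by omega
  set n := c + k with hn
  have hdpos : ∀ m : ℕ, (0 : ℤ) < (d : ℤ) ^ m := fun m => by positivity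
  set δ := ((d : ℤ) ^ c * r - (V₀ ^ n).val) % (d : ℤ) ^ n with hδ
  have hδ0 : 0 ≤ δ := Int.emod_nonneg _ (hdpos n).ne'
  have hδ1 : δ < (d : ℤ) ^ n := Int.emod_lt_of_pos _ (hdpos n)
  obtain ⟨y, hy⟩ : ∃ y, δ = (d : ℤ) ^ c * r - (V₀ ^ n).val + (d : ℤ) ^ n * y :=
    ⟨-(((d : ℤ) ^ c * r - (V₀ ^ n).val) / (d : ℤ) ^ n), by
      have := Int.emod_add_mul_ediv ((d : ℤ) ^ c * r - (V₀ ^ n).val) ((d : ℤ) ^ n)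
      linear_combination this⟩
  obtain ⟨z, hz0, hz1, hz2⟩ : ∃ z : ℕ, (z : ℤ) ≤ δ ∧ δ ≤ c * z ∧ (c : ℤ) * z < δ + c := by
    obtain ⟨a, ha⟩ := Int.eq_ofNat_of_zero_le hδ0
    refine ⟨(a + c - 1) / c, ?_, ?_, ?_⟩
    · rw [ha]
      norm_cast
      rw [Nat.div_le_iff_le_mul_add_pred hcpos]
      have := Nat.le_mul_of_pos_left a hcpos
      omega
    · rw [ha]
      norm_cast
      have := Nat.div_add_mod (a + c - 1) c
      have := Nat.mod_lt (a + c - 1) hcpos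
      omega
    · rw [ha]
      norm_cast
      have := Nat.div_mul_le_self (a + c - 1) c
      rw [mul_comm] at this
      omega
  have hzn : z < (d ^ V₀.len) ^ n := by
    have h1 : z < d ^ n := by exact_mod_cast hz0.trans_lt hδ1
    rw [← pow_mul]
    exact h1.trans_le (Nat.pow_le_pow_right (by omega) (Nat.le_mul_of_pos_left _ hlpos))
  obtain ⟨e, he, hel, hes⟩ := exists_sum_eq_mul hlen (by omega) n z hzn
  obtain ⟨s, hs, t, ht, hst'⟩ := exists_sum_perturbation (by omega) hst
    (hfin (2 * ((d ^ V₀.len - 1 : ℕ) : ℤ) + 1)) hW hu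
    (pow_mem (Submonoid.subset_closure (by simp)) n) he hel hA (d ^ V₀.len - 1) le_rfl
  have hmem := hst' 1 (one_mem _) 1 (one_mem _)
  rw [hes, ← hc] at hmem
  have hcd : (c : ℤ) < (d : ℤ) ^ c := by exact_mod_cast Nat.lt_pow_self (by omega)
  have hblock : (⟨c, c * z - δ⟩ : DigitBlock d) ∈ bounded d 1 :=
    mem_bounded_one_of_nonneg (show (0 : ℤ) ≤ c * z - δ by omega)
      (show (c * z - δ : ℤ) < (d : ℤ) ^ c by omega)
  have hkill := hq (u * s * ⟨c, c * z - δ⟩) (mul_mem (mul_mem hu (hW hs)) hblock)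
  obtain ⟨w, hw⟩ : ∃ w, n * V₀.len = n + w :=
    ⟨_, (Nat.add_sub_of_le (Nat.le_mul_of_pos_right _ hlpos)).symm⟩
  refine (Set.eq_empty_iff_forall_notMem.mp hkill) (y + (d : ℤ) ^ w * (t * v).val) ?_
  rw [mem_residual]
  convert hmem using 1
  have hvlen : (V₀ ^ n).len = n + w := by rw [len_pow, hw]
  clear_value δ
  generalize V₀ ^ n = P at *
  simp only [val_mul, len_mul, len_one, val_one, hvlen, add_zero, mul_zero, pow_add]
  simp only [hn, pow_add] at hy ⊢
  linear_combination (-(d : ℤ) ^ u.len * (d : ℤ) ^ s.len) * hy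

end DigitBlock

namespace DigitBlock

variable {d : ℕ}

/-- The block of digits given by a word. -/
def ofWord (d : ℕ) (σ : List ℤ) : DigitBlock d := ⟨σ.length, evalZ d σ⟩

@[simp] theorem ofWord_nil : ofWord d [] = 1 := rfl

theorem ofWord_append (σ τ : List ℤ) : ofWord d (σ ++ τ) = ofWord d σ * ofWord d τ := by
  refine DigitBlock.ext List.length_append ?_
  change evalZ d (σ ++ τ) = evalZ d σ + (d : ℤ) ^ σ.length * evalZ d τ
  induction σ with
  | nil => simp [evalZ]
  | cons a σ ih =>
    simp only [List.cons_append, evalZ, ih, List.length_cons, pow_succ]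
    ring

theorem ofWord_mem_bounded {σ : List ℤ} (hd : 0 < d) (h : ∀ k ∈ σ, k.natAbs ≤ d - 1) :
    ofWord d σ ∈ bounded d 1 := by
  induction σ with
  | nil => exact one_mem _
  | cons a σ ih =>
    rw [← List.singleton_append, ofWord_append]
    refine mul_mem ?_ (ih fun k hk => h k (List.mem_cons_of_mem _ hk))
    have := h a List.mem_cons_self
    rw [mem_bounded]
    simp only [ofWord, evalZ, List.length_singleton, pow_one, mul_zero, add_zero, one_mul]
    rw [Int.abs_eq_natAbs]
    omega

theorem exists_word_of_length (hd : 0 < d) (n : ℕ) {r : ℤ} (h0 : 0 ≤ r) (h1 : r < (d : ℤ) ^ n) :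
    ∃ σ : List ℤ, (∀ k ∈ σ, k.natAbs ≤ d - 1) ∧ ofWord d σ = ⟨n, r⟩ := by
  induction n generalizing r with
  | zero => exact ⟨[], by simp, DigitBlock.ext rfl (by simp at h1 ⊢; omega)⟩
  | succ n ih =>
    have hd' : (0 : ℤ) < d := by exact_mod_cast hd
    obtain ⟨σ, hσ, hσr⟩ := ih (r := r / d) (Int.ediv_nonneg h0 hd'.le)
      (Int.ediv_lt_of_lt_mul hd' (by rwa [← pow_succ]))
    refine ⟨r % d :: σ, fun k hk => ?_, DigitBlock.ext ?_ ?_⟩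
    · rcases List.mem_cons.mp hk with rfl | hk
      · have := Int.emod_nonneg r hd'.ne'
        have := Int.emod_lt_of_pos r hd'
        omega
      · exact hσ k hk
    · exact congrArg (· + 1) (congrArg len hσr)
    · have : evalZ d σ = r / d := congrArg val hσr
      simp only [ofWord, evalZ, this]
      exact Int.emod_add_mul_ediv r d

end DigitBlock

theorem evalZ_map_mul_natCast (d : ℕ) (ε : ℤ) (l : List ℕ) :
    evalZ d (l.map fun k : ℕ => ε * (k : ℤ)) = ε * (Nat.ofDigits d l : ℕ) := by
  induction l with
  | nil => simp [evalZ]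
  | cons a l ih =>
    simp only [List.map_cons, evalZ, ih, Nat.ofDigits_cons]
    push_cast
    ring

theorem canonRep_sign_mul (d n : ℕ) {ε : ℤ} (hε : ε = 1 ∨ ε = -1) :
    canonRep d (ε * n) = (Nat.digits d n).map fun k : ℕ => ε * (k : ℤ) := by
  rcases hε with rfl | rfl
  · simp [canonRep, List.map_eq_flatMap]
  · rcases Nat.eq_zero_or_pos n with rfl | hn
    · simp [canonRep]
    · rw [canonRep, if_neg (by omega)]
      simp [List.map_eq_flatMap, List.flatMap_assoc]

theorem exists_sign_mul (a : ℤ) : ∃ (ε : ℤ) (n : ℕ), (ε = 1 ∨ ε = -1) ∧ a = ε * n := by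
  obtain ⟨n, rfl | rfl⟩ := a.eq_nat_or_neg
  · exact ⟨1, n, .inl rfl, (one_mul _).symm⟩
  · exact ⟨-1, n, .inr rfl, by ring⟩

theorem evalZ_canonRep (d : ℕ) (a : ℤ) : evalZ d (canonRep d a) = a := by
  obtain ⟨ε, n, hε, rfl⟩ := exists_sign_mul a
  rw [canonRep_sign_mul d n hε, evalZ_map_mul_natCast, Nat.ofDigits_digits]

/-- The digits of sign `ε`, zero included. -/
def signedDigits (d : ℕ) (ε : ℤ) : Finset ℤ := (Finset.range d).image fun k : ℕ => ε * k

theorem natAbs_le_of_mem_signedDigits {d : ℕ} {ε k : ℤ} (hε : ε = 1 ∨ ε = -1)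
    (hk : k ∈ signedDigits d ε) : k.natAbs ≤ d - 1 := by
  obtain ⟨n, hn, rfl⟩ := Finset.mem_image.mp hk
  have := Finset.mem_range.mp hn
  rcases hε with rfl | rfl <;> omega

theorem card_signedDigits_le (d : ℕ) (ε : ℤ) : (signedDigits d ε).card ≤ d :=
  Finset.card_image_le.trans (Finset.card_range d).le

/-- Words over `Γ` whose last letter is not zero. -/
def reducedWords (Γ : Finset ℤ) : Set (List ℤ) :=
  {w | (∀ a ∈ w, a ∈ Γ) ∧ ∀ h : w ≠ [], w.getLast h ≠ 0}

theorem regularLang_reducedWords (Γ : Finset ℤ) : RegularLang (reducedWords Γ) := by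
  let M : DFA ℤ (Prop × Prop) :=
    { step := fun s a => (s.1 ∧ a ∈ Γ, a ≠ 0), start := (True, True), accept := {s | s.1 ∧ s.2} }
  have hM : ∀ w, M.eval w = (∀ a ∈ w, a ∈ Γ, ∀ h : w ≠ [], w.getLast h ≠ 0) := by
    intro w
    induction w using List.reverseRecOn with
    | nil => simp [M]
    | append_singleton w a ih =>
      rw [DFA.eval_append_singleton, ih]
      simp [M, or_imp, forall_and]
  refine ⟨Prop × Prop, inferInstance, M, Set.ext fun w => ?_⟩
  change M.eval w ∈ M.accept ↔ _
  rw [hM]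
  rfl

theorem exists_eq_map_of_forall_mem_signedDigits {d : ℕ} {ε : ℤ} {w : List ℤ}
    (h : ∀ a ∈ w, a ∈ signedDigits d ε) :
    ∃ l : List ℕ, (∀ k ∈ l, k < d) ∧ w = l.map fun k : ℕ => ε * (k : ℤ) := by
  induction w with
  | nil => exact ⟨[], by simp, rfl⟩
  | cons a w ih =>
    obtain ⟨l, hl, rfl⟩ := ih fun a ha => h a (List.mem_cons_of_mem _ ha)
    obtain ⟨k, hk, rfl⟩ := Finset.mem_image.mp (h a List.mem_cons_self)
    exact ⟨k :: l, by simpa using ⟨Finset.mem_range.mp hk, hl⟩, rfl⟩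

theorem evalZ_injective_of_signedDigits {d : ℕ} (hd : 2 ≤ d) {ε : ℤ} (hε : ε ≠ 0)
    {x y : List ℤ} (hlen : x.length = y.length) (hx : ∀ a ∈ x, a ∈ signedDigits d ε)
    (hy : ∀ a ∈ y, a ∈ signedDigits d ε) (h : evalZ d x = evalZ d y) : x = y := by
  obtain ⟨l, hl, rfl⟩ := exists_eq_map_of_forall_mem_signedDigits hx
  obtain ⟨l', hl', rfl⟩ := exists_eq_map_of_forall_mem_signedDigits hy
  rw [evalZ_map_mul_natCast, evalZ_map_mul_natCast] at h
  rw [Nat.ofDigits_inj_of_len_eq hd (by simpa using hlen) hl hl'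
    (by exact_mod_cast mul_left_cancel₀ hε h)]

theorem mem_reducedWords_signedDigits_iff {d : ℕ} (hd : 2 ≤ d) {ε : ℤ} (hε : ε = 1 ∨ ε = -1)
    {w : List ℤ} :
    w ∈ reducedWords (signedDigits d ε) ↔ ∃ n : ℕ, w = canonRep d (ε * n) := by
  have hε0 : ε ≠ 0 := by omega
  constructor
  · rintro ⟨h1, h2⟩
    obtain ⟨l, hl, rfl⟩ := exists_eq_map_of_forall_mem_signedDigits h1
    refine ⟨Nat.ofDigits d l, ?_⟩
    rw [canonRep_sign_mul d _ hε, Nat.digits_ofDigits d hd l hl]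
    intro h h0
    exact h2 (by simpa using h) (by simp [List.getLast_map, h0])
  · rintro ⟨n, rfl⟩
    rw [canonRep_sign_mul d n hε]
    refine ⟨fun a ha => ?_, fun h => ?_⟩
    · obtain ⟨k, hk, rfl⟩ := List.mem_map.mp ha
      exact Finset.mem_image_of_mem _ (Finset.mem_range.mpr (Nat.digits_lt_base hd hk))
    · rw [List.getLast_map]
      have hn : n ≠ 0 := by
        rintro rfl
        simp at h
      simpa [hε0] using Nat.getLast_digit_ne_zero d hn

theorem natAbs_le_of_mem_canonRep {d : ℕ} (hd : 2 ≤ d) {a k : ℤ} (hk : k ∈ canonRep d a) :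
    k.natAbs ≤ d - 1 := by
  obtain ⟨ε, n, hε, rfl⟩ := exists_sign_mul a
  exact natAbs_le_of_mem_signedDigits hε
    (((mem_reducedWords_signedDigits_iff hd hε).mpr ⟨n, rfl⟩).1 k hk)

theorem image_canonRep_eq {d : ℕ} (hd : 2 ≤ d) (A : Set ℤ) :
    canonRep d '' A = {σ | (∀ k ∈ σ, k.natAbs ≤ d - 1) ∧ evalZ d σ ∈ A} ∩
      (reducedWords (signedDigits d 1) ∪ reducedWords (signedDigits d (-1))) := by
  ext w
  constructor
  · rintro ⟨a, ha, rfl⟩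
    refine ⟨⟨fun k hk => natAbs_le_of_mem_canonRep hd hk, by rwa [evalZ_canonRep]⟩, ?_⟩
    obtain ⟨ε, n, hε, rfl⟩ := exists_sign_mul a
    have := (mem_reducedWords_signedDigits_iff hd hε).mpr ⟨n, rfl⟩
    rcases hε with rfl | rfl
    · exact .inl this
    · exact .inr this
  · rintro ⟨⟨-, hA⟩, hw⟩
    obtain ⟨a, rfl⟩ : ∃ a, w = canonRep d a := by
      rcases hw with hw | hw
      · obtain ⟨n, h⟩ := (mem_reducedWords_signedDigits_iff hd (.inl rfl)).mp hw
        exact ⟨_, h⟩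
      · obtain ⟨n, h⟩ := (mem_reducedWords_signedDigits_iff hd (.inr rfl)).mp hw
        exact ⟨_, h⟩
    exact ⟨a, by rwa [evalZ_canonRep] at hA, rfl⟩

theorem sparseZ_of_not_hasBranchingLoop {d : ℕ} (hd : 2 ≤ d) {A : Set ℤ} {Q : Type} [Fintype Q]
    {M : DFA ℤ Q} (hM : M.accepts = {σ | (∀ k ∈ σ, k.natAbs ≤ d - 1) ∧ evalZ d σ ∈ A})
    (h : ∀ ε : ℤ, ε = 1 ∨ ε = -1 → ¬ M.HasBranchingLoop (signedDigits d ε)) : SparseZ d A := by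
  refine ⟨?_, 2 * (2 * (d + 1)) ^ Fintype.card Q, Fintype.card Q, fun k => ?_⟩
  · rw [image_canonRep_eq hd, ← hM]
    have h1 : Language.IsRegular M.accepts := ⟨Q, inferInstance, M, rfl⟩
    have h2 : ∀ Γ, Language.IsRegular (reducedWords Γ) := regularLang_reducedWords
    exact h1.inf ((h2 _).add (h2 _))
  · have hF : ∀ ε : ℤ, ε = 1 ∨ ε = -1 → _ := fun ε hε =>
      DFA.exists_finset_card_le_of_not_hasBranchingLoop_of_fintype M (signedDigits d ε) (h ε hε) k
    obtain ⟨F, hFc, hF'⟩ := hF 1 (.inl rfl)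
    obtain ⟨G, hGc, hG'⟩ := hF (-1) (.inr rfl)
    have hsub : {σ ∈ canonRep d '' A | σ.length ≤ k} ⊆ ((F ∪ G : Finset (List ℤ)) : Set _) := by
      rintro σ ⟨hσ, hk⟩
      rw [image_canonRep_eq hd, ← hM] at hσ
      rw [Finset.mem_coe, Finset.mem_union]
      exact hσ.2.imp (fun h => hF' σ hσ.1 hk h.1) fun h => hG' σ hσ.1 hk h.1
    have hcard : ∀ ε : ℤ, (((signedDigits d ε).card + 1) * (k + 1)) ^ Fintype.card Q ≤
        (2 * (d + 1)) ^ Fintype.card Q * (k ^ Fintype.card Q + 1) := by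
      intro ε
      rw [mul_pow, mul_comm 2, mul_pow, mul_assoc]
      refine Nat.mul_le_mul (Nat.pow_le_pow_left (by have := card_signedDigits_le d ε; omega) _) ?_
      rcases Nat.eq_zero_or_pos k with rfl | hk
      · exact (one_pow (M := ℕ) _).le.trans (Nat.mul_pos (by positivity) (Nat.succ_pos _))
      · calc (k + 1) ^ Fintype.card Q ≤ (2 * k) ^ Fintype.card Q :=
              Nat.pow_le_pow_left (by omega) _
          _ = 2 ^ Fintype.card Q * k ^ Fintype.card Q := mul_pow _ _ _
          _ ≤ _ := Nat.mul_le_mul_left _ (Nat.le_succ _)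
    refine ⟨(Finset.finite_toSet _).subset hsub,
      (Set.ncard_le_ncard hsub (Finset.finite_toSet _)).trans ?_⟩
    rw [Set.ncard_coe_finset, mul_assoc]
    have := Finset.card_union_le F G
    have := hFc.trans (hcard 1)
    have := hGc.trans (hcard (-1))
    omega

theorem add_mul_eq_emod_add_mul_add_ediv (a b n : ℤ) : a + b * n = a % b + b * (n + a / b) := by
  linear_combination -(Int.emod_add_mul_ediv a b)

theorem finite_image_residual {d : ℕ} (hd : 2 ≤ d) {A : Set ℤ} (hA : AutomaticZ d A) (N : ℤ) :
    (DigitBlock.residual A '' (DigitBlock.bounded d N : Set (DigitBlock d))).Finite := by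
  obtain ⟨Q, _, M, hM⟩ := hA
  let G : Q → Set ℤ := fun q => {n | M.evalFrom q (canonRep d n) ∈ M.accept}
  refine ((Set.finite_univ.prod (Set.finite_Icc (-|N| - 1) |N|)).image
    fun s : Q × ℤ => {n | n + s.2 ∈ G s.1}).subset ?_
  rintro _ ⟨p, hp, rfl⟩
  have hD : (0 : ℤ) < (d : ℤ) ^ p.len := by positivity
  obtain ⟨σ, hσ, hσp⟩ := DigitBlock.exists_word_of_length (d := d) (by omega) p.len
    (Int.emod_nonneg p.val hD.ne') (Int.emod_lt_of_pos p.val hD)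
  have hp' : |p.val| ≤ |N| * (d : ℤ) ^ p.len :=
    (DigitBlock.mem_bounded.mp hp).trans (by nlinarith [le_abs_self N, abs_nonneg N])
  rw [abs_le] at hp'
  refine ⟨(M.eval σ, p.val / (d : ℤ) ^ p.len), ⟨Set.mem_univ _, ?_, ?_⟩, Set.ext fun n => ?_⟩
  · exact (Int.le_ediv_iff_mul_le hD).mpr (by nlinarith)
  · exact Int.ediv_le_of_le_mul hD hp'.2
  · have h1 : M.evalFrom (M.eval σ) (canonRep d (n + p.val / (d : ℤ) ^ p.len)) ∈ M.accept ↔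
        σ ++ canonRep d (n + p.val / (d : ℤ) ^ p.len) ∈ M.accepts := by
      rw [DFA.mem_accepts, DFA.eval, DFA.evalFrom_of_append]
    have h2 : evalZ d (σ ++ canonRep d (n + p.val / (d : ℤ) ^ p.len)) =
        p.val + (d : ℤ) ^ p.len * n := by
      rw [add_mul_eq_emod_add_mul_add_ediv p.val]
      have := congrArg DigitBlock.val (DigitBlock.ofWord_append (d := d) σ
        (canonRep d (n + p.val / (d : ℤ) ^ p.len)))
      rw [hσp] at this
      refine this.trans ?_
      rw [DigitBlock.val_mul, DigitBlock.ofWord, evalZ_canonRep]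
    rw [DigitBlock.mem_residual, ← h2]
    refine h1.trans ?_
    rw [hM]
    refine ⟨fun h => h.2, fun h => ⟨fun k hk => ?_, h⟩⟩
    rcases List.mem_append.mp hk with hk | hk
    · exact hσ k hk
    · exact natAbs_le_of_mem_canonRep hd hk

theorem stmt7 (d : ℕ) (hd : 2 ≤ d) (A : Set ℤ)
    (hauto : AutomaticZ d A) (hns : ¬ SparseZ d A) (hst : StableIn A) :
    GenericZ A := by
  have hfin := finite_image_residual hd hauto
  obtain ⟨Q, _, M, hM⟩ := hauto
  obtain ⟨ε, hε, q, u, x, y, w, hu, hx, hy, hw, hlen, hxy, hxd, hyd⟩ :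
      ∃ ε : ℤ, (ε = 1 ∨ ε = -1) ∧ M.HasBranchingLoop (signedDigits d ε) := by
    by_contra! h
    exact hns (sparseZ_of_not_hasBranchingLoop hd hM h)
  have hmem : ∀ z, M.evalFrom q z = q →
      (∀ k ∈ u ++ z ++ w, k.natAbs ≤ d - 1) ∧ evalZ d (u ++ z ++ w) ∈ A := by
    intro z hz
    change u ++ z ++ w ∈ {σ | (∀ k ∈ σ, k.natAbs ≤ d - 1) ∧ evalZ d σ ∈ A}
    rw [← hM]
    change M.evalFrom M.start (u ++ z ++ w) ∈ M.accept
    rw [DFA.eval] at hu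
    rwa [DFA.evalFrom_of_append, DFA.evalFrom_of_append, hu, hz]
  have hbd : ∀ z, (∀ k ∈ z, k ∈ signedDigits d ε) →
      DigitBlock.ofWord d z ∈ DigitBlock.bounded d 1 := fun z hz =>
    DigitBlock.ofWord_mem_bounded (by omega) fun k hk => natAbs_le_of_mem_signedDigits hε (hz k hk)
  refine DigitBlock.genericZ_of_free_submonoid (u := .ofWord d u) (v := .ofWord d w) hst hd
    hfin (DigitBlock.ofWord_mem_bounded (by omega) fun k hk =>
      (hmem [] rfl).1 k (by simp [hk])) (hbd x hxd) (hbd y hyd) hlen.symm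
    (fun h => hxy (evalZ_injective_of_signedDigits hd (by omega) hlen hxd hyd h)) fun b hb => ?_
  obtain ⟨z, hz, rfl⟩ : ∃ z, M.evalFrom q z = q ∧ DigitBlock.ofWord d z = b := by
    induction hb using Submonoid.closure_induction with
    | mem b hb =>
      rcases hb with rfl | rfl
      · exact ⟨x, hx, rfl⟩
      · exact ⟨y, hy, rfl⟩
    | one => exact ⟨[], rfl, rfl⟩
    | mul b c _ _ hb hc =>
      obtain ⟨z, hz, rfl⟩ := hb
      obtain ⟨z', hz', rfl⟩ := hc
      exact ⟨z ++ z', by rw [DFA.evalFrom_of_append, hz, hz'], DigitBlock.ofWord_append z z'⟩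
  rw [← DigitBlock.ofWord_append, ← DigitBlock.ofWord_append]
  exact (hmem z hz).2
end
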